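/- Among connected graphs of the tetrahedral model with an odd number b of bubbles, the graphs maximizing the number of faces are exactly the double tadpoles decorated with melonic 2-point functions, and they satisfy F(G) = (3/2)(b−1) + 4 = (3/2)b + 5/2. -/

import Mathlib

/-!  A combinatorial model of the Feynman graphs of the rank-3 tetrahedral
(`O(N)^3`) tensor model.

A graph consists of a finite set `B` of bubbles (copies of the tetrahedron
`K_4`); each bubble has four vertices, so the vertex set is `B × Fin 4`.
Inside every bubble the edges of colors `1,2,3` are given once and for all by
the three fixed-point-free involutions of `Fin 4` (the proper 3-edge-coloring
of `K_4`).  The color-0 propagator edges, one per vertex, are encoded by a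
fixed-point-free involution `pairing` of the vertex set. -/

open Equiv

/-- The color-`c` (for `c ∈ {1,2,3}`, here `c : Fin 3`) perfect matching on the
four vertices of a tetrahedral bubble. -/
def bubblePerm : Fin 3 → Equiv.Perm (Fin 4) :=
  ![Equiv.swap 0 1 * Equiv.swap 2 3,
    Equiv.swap 0 2 * Equiv.swap 1 3,
    Equiv.swap 0 3 * Equiv.swap 1 2]

/-- A Feynman graph of the tetrahedral tensor model: a finite set of `K_4`
bubbles together with a fixed-point-free involution of the vertex set
describing the color-0 edges. -/
structure TGraph where
  B : Type
  [fintypeB : Fintype B]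
  [decB : DecidableEq B]
  pairing : Equiv.Perm (B × Fin 4)
  invol : ∀ v, pairing (pairing v) = v
  fixfree : ∀ v, pairing v ≠ v

attribute [instance] TGraph.fintypeB TGraph.decB

namespace TGraph

/-- The vertex set of a graph. -/
abbrev V (G : TGraph) : Type := G.B × Fin 4

/-- The permutation of the vertices given by the color-`c` edges inside the
bubbles. -/
def colPerm (G : TGraph) (c : Fin 3) : Equiv.Perm G.V :=
  (Equiv.refl G.B).prodCongr (bubblePerm c)

/-- The number of bubbles of a graph. -/
def b (G : TGraph) : ℕ := Fintype.card G.B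

/-- The subgroup of permutations of the vertices generated by the color-0
pairing and the color-`c` matching: its orbits are exactly the faces of
color `c` (cycles alternating colors `0` and `c`). -/
def faceGroup (G : TGraph) (c : Fin 3) : Subgroup (Equiv.Perm G.V) :=
  Subgroup.closure {G.pairing, G.colPerm c}

/-- Two vertices lie on the same face of color `c`. -/
def sameFace (G : TGraph) (c : Fin 3) (u v : G.V) : Prop :=
  u ∈ MulAction.orbit (G.faceGroup c) v

/-- The number of faces of color `c` of the graph. -/
noncomputable def numFaces (G : TGraph) (c : Fin 3) : ℕ :=
  Nat.card (MulAction.orbitRel.Quotient (G.faceGroup c) G.V)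

/-- The total number of faces of the graph. -/
noncomputable def F (G : TGraph) : ℕ := ∑ c : Fin 3, G.numFaces c

/-- The length of the face of color `c` through the vertex `v` (a face of
length `n` consists of `n` color-0 edges and `n` color-`c` edges, hence `2n`
vertices). -/
noncomputable def faceLength (G : TGraph) (c : Fin 3) (v : G.V) : ℕ :=
  Nat.card (MulAction.orbit (G.faceGroup c) v) / 2

/-- The subgroup generated by all edges of the graph. -/
def fullGroup (G : TGraph) : Subgroup (Equiv.Perm G.V) :=
  Subgroup.closure ({G.pairing} ∪ Set.range G.colPerm)

/-- A graph is connected if any vertex can be reached from any other one along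
its edges. -/
def Connected (G : TGraph) : Prop :=
  ∀ u v : G.V, u ∈ MulAction.orbit G.fullGroup v

/-- One step along an edge of the graph avoiding the color-0 edges whose
endpoints belong to `S`. -/
def stepAvoiding (G : TGraph) (S : Set G.V) (u v : G.V) : Prop :=
  (∃ c, v = G.colPerm c u) ∨ (v = G.pairing u ∧ u ∉ S ∧ v ∉ S)

/-- Reachability in the graph with the color-0 edges meeting `S` removed. -/
def reachAvoiding (G : TGraph) (S : Set G.V) : G.V → G.V → Prop :=
  Relation.ReflTransGen (G.stepAvoiding S)

/-- The pair of color-0 edges through the vertices `u` and `w` disconnects the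
graph when removed.  Together with the requirement that the two edges be
distinct, this is the notion of a 2-edge-cut of color-0 edges. -/
def CutDisconnects (G : TGraph) (u w : G.V) : Prop :=
  ¬ ∀ x y : G.V, G.reachAvoiding {u, G.pairing u, w, G.pairing w} x y

/-- Two vertices are connected by a 2-point function if they are joined by a
color-0 edge, or if their two (distinct) color-0 edges form a 2-edge-cut. -/
def TwoPoint (G : TGraph) (x y : G.V) : Prop :=
  G.pairing x = y ∨ (y ≠ x ∧ y ≠ G.pairing x ∧ G.CutDisconnects x y)

/-- The flip of the two color-0 edges `{u, pairing u}` and `{w, pairing w}`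
(assumed distinct) which reconnects `u` with `w` (and `pairing u` with
`pairing w`): the pairing is conjugated by the transposition exchanging
`pairing u` and `w`.  The other flip of this pair of edges is
`G.flip u (G.pairing w)`. -/
def flip (G : TGraph) (u w : G.V) : TGraph where
  B := G.B
  pairing := Equiv.swap (G.pairing u) w * G.pairing * Equiv.swap (G.pairing u) w
  invol := by
    intro v
    simp only [Equiv.Perm.mul_apply, Equiv.swap_apply_self, G.invol]
  fixfree := by
    intro v h
    simp only [Equiv.Perm.mul_apply] at h
    have h' : G.pairing (Equiv.swap (G.pairing u) w v) = Equiv.swap (G.pairing u) w v := by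
      have := congrArg (Equiv.swap (G.pairing u) w) h
      simpa using this
    exact G.fixfree _ h'

/-- The face of color `c` through the color-0 edge `{v, pairing v}` has
length 2 (it consists of this edge, a color-`c` edge, a second color-0 edge
and a second color-`c` edge closing the cycle). -/
def FaceLen2 (G : TGraph) (c : Fin 3) (v : G.V) : Prop :=
  G.pairing v ≠ G.colPerm c v ∧
    G.pairing (G.colPerm c (G.pairing v)) = G.colPerm c v

/-- A proper face of length 2 of color `c` through `v`: a face of length 2
whose two color-0 edges connect two distinct bubbles. -/
def ProperFace2 (G : TGraph) (c : Fin 3) (v : G.V) : Prop :=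
  G.FaceLen2 c v ∧ (G.pairing v).1 ≠ v.1

/-- A graph maximizes the number of faces if it is connected and no connected
graph with the same number of bubbles has more faces. -/
def MaximizesFaces (G : TGraph) : Prop :=
  G.Connected ∧ ∀ H : TGraph, H.Connected → H.b = G.b → H.F ≤ G.F

/-- Isomorphisms of graphs: bijections of the vertex sets commuting with the
color-0 pairing and with the colored matchings inside the bubbles. -/
structure Iso (G H : TGraph) where
  toEquiv : G.V ≃ H.V
  map_pairing : ∀ v, toEquiv (G.pairing v) = H.pairing (toEquiv v)
  map_col : ∀ c v, toEquiv (G.colPerm c v) = H.colPerm c (toEquiv v)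

/-- Two graphs are isomorphic. -/
def IsIso (G H : TGraph) : Prop := Nonempty (Iso G H)

end TGraph

open TGraph

/-- The leading-order two-bubble graph `G_2`: two tetrahedral bubbles with
corresponding vertices joined by four color-0 edges, so that all six faces
have length 2. -/
def G2 : TGraph where
  B := Fin 2
  pairing := (Equiv.swap (0 : Fin 2) 1).prodCongr (Equiv.refl (Fin 4))
  invol := by
    rintro ⟨i, k⟩
    simp [Equiv.prodCongr_apply, Equiv.swap_apply_self]
  fixfree := by
    rintro ⟨i, k⟩ h
    have hi : Equiv.swap (0 : Fin 2) 1 i = i := congrArg Prod.fst h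
    fin_cases i <;> simp_all

/-- The double tadpole `G_1^{(c)}`: one tetrahedral bubble whose two color-0
edges each join two vertices already adjacent by an edge of color `c`. -/
def G1 (c : Fin 3) : TGraph where
  B := Fin 1
  pairing := (Equiv.refl (Fin 1)).prodCongr (bubblePerm c)
  invol := by
    rintro ⟨i, k⟩
    have hk : ∀ j : Fin 4, bubblePerm c (bubblePerm c j) = j := by
      fin_cases c <;> decide
    simp [Equiv.prodCongr_apply, hk]
  fixfree := by
    rintro ⟨i, k⟩ h
    have hk : bubblePerm c k = k := congrArg Prod.snd h
    have hne : ∀ j : Fin 4, bubblePerm c j ≠ j := by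
      fin_cases c <;> decide
    exact hne k hk

namespace TGraph

variable (H K : TGraph)

/-- The image of a vertex of `H` in the glued graph. -/
def inlV (x : H.V) : (H.B ⊕ K.B) × Fin 4 := (Sum.inl x.1, x.2)

/-- The image of a vertex of `K` in the glued graph. -/
def inrV (y : K.V) : (H.B ⊕ K.B) × Fin 4 := (Sum.inr y.1, y.2)

/-- The underlying function of the pairing of the graph obtained by gluing `H`
and `K` along the color-0 edges `{p, H.pairing p}` and `{q, K.pairing q}`:
these two edges are cut and the half-edges are reglued as `p — q` and
`H.pairing p — K.pairing q`.  The new pair of edges is a 2-edge-cut of the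
resulting graph when `H` and `K` are connected. -/
def glueFun (p : H.V) (q : K.V) : (H.B ⊕ K.B) × Fin 4 → (H.B ⊕ K.B) × Fin 4 :=
  fun z =>
    match z with
    | (Sum.inl u, k) =>
        if (u, k) = p then inrV H K q
        else if (u, k) = H.pairing p then inrV H K (K.pairing q)
        else inlV H K (H.pairing (u, k))
    | (Sum.inr u, k) =>
        if (u, k) = q then inlV H K p
        else if (u, k) = K.pairing q then inlV H K (H.pairing p)
        else inrV H K (K.pairing (u, k))

theorem glueFun_inlV (p : H.V) (q : K.V) (x : H.V) :
    glueFun H K p q (inlV H K x) =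
      if x = p then inrV H K q
      else if x = H.pairing p then inrV H K (K.pairing q)
      else inlV H K (H.pairing x) := by
  cases x
  rfl

theorem glueFun_inrV (p : H.V) (q : K.V) (y : K.V) :
    glueFun H K p q (inrV H K y) =
      if y = q then inlV H K p
      else if y = K.pairing q then inlV H K (H.pairing p)
      else inrV H K (K.pairing y) := by
  cases y
  rfl

theorem inlV_injective : Function.Injective (inlV H K) := by
  rintro ⟨u, k⟩ ⟨u', k'⟩ h
  have h1 : (Sum.inl u : H.B ⊕ K.B) = Sum.inl u' := congrArg Prod.fst h
  have h2 : k = k' := congrArg Prod.snd h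
  exact Prod.ext (Sum.inl_injective h1) h2

theorem inrV_injective : Function.Injective (inrV H K) := by
  rintro ⟨u, k⟩ ⟨u', k'⟩ h
  have h1 : (Sum.inr u : H.B ⊕ K.B) = Sum.inr u' := congrArg Prod.fst h
  have h2 : k = k' := congrArg Prod.snd h
  exact Prod.ext (Sum.inr_injective h1) h2

theorem inlV_ne_inrV (x : H.V) (y : K.V) : inlV H K x ≠ inrV H K y := by
  intro h
  exact Sum.inl_ne_inr (congrArg Prod.fst h)

theorem glueFun_invol_inl (p : H.V) (q : K.V) (x : H.V) :
    glueFun H K p q (glueFun H K p q (inlV H K x)) = inlV H K x := by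
  rw [glueFun_inlV]
  by_cases h1 : x = p
  · rw [if_pos h1, glueFun_inrV, if_pos rfl, h1]
  · by_cases h2 : x = H.pairing p
    · rw [if_neg h1, if_pos h2, glueFun_inrV,
        if_neg (fun h => K.fixfree q h), if_pos rfl, h2]
    · have hne1 : H.pairing x ≠ p := by
        intro h; apply h2
        have := congrArg H.pairing h
        rw [H.invol] at this; exact this
      have hne2 : H.pairing x ≠ H.pairing p := fun h => h1 (H.pairing.injective h)
      rw [if_neg h1, if_neg h2, glueFun_inlV, if_neg hne1, if_neg hne2, H.invol]

theorem glueFun_invol_inr (p : H.V) (q : K.V) (y : K.V) :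
    glueFun H K p q (glueFun H K p q (inrV H K y)) = inrV H K y := by
  rw [glueFun_inrV]
  by_cases h1 : y = q
  · rw [if_pos h1, glueFun_inlV, if_pos rfl, h1]
  · by_cases h2 : y = K.pairing q
    · rw [if_neg h1, if_pos h2, glueFun_inlV,
        if_neg (fun h => H.fixfree p h), if_pos rfl, h2]
    · have hne1 : K.pairing y ≠ q := by
        intro h; apply h2
        have := congrArg K.pairing h
        rw [K.invol] at this; exact this
      have hne2 : K.pairing y ≠ K.pairing q := fun h => h1 (K.pairing.injective h)
      rw [if_neg h1, if_neg h2, glueFun_inrV, if_neg hne1, if_neg hne2, K.invol]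

theorem glueFun_involutive (p : H.V) (q : K.V) :
    Function.Involutive (glueFun H K p q) := by
  rintro ⟨(u | u), k⟩
  · exact glueFun_invol_inl H K p q (u, k)
  · exact glueFun_invol_inr H K p q (u, k)

theorem glueFun_fixfree (p : H.V) (q : K.V) :
    ∀ z, glueFun H K p q z ≠ z := by
  have hl : ∀ x : H.V, glueFun H K p q (inlV H K x) ≠ inlV H K x := by
    intro x h
    rw [glueFun_inlV] at h
    by_cases h1 : x = p
    · rw [if_pos h1] at h
      exact inlV_ne_inrV H K x q h.symm
    · by_cases h2 : x = H.pairing p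
      · rw [if_neg h1, if_pos h2] at h
        exact inlV_ne_inrV H K x (K.pairing q) h.symm
      · rw [if_neg h1, if_neg h2] at h
        exact H.fixfree x (inlV_injective H K h)
  have hr : ∀ y : K.V, glueFun H K p q (inrV H K y) ≠ inrV H K y := by
    intro y h
    rw [glueFun_inrV] at h
    by_cases h1 : y = q
    · rw [if_pos h1] at h
      exact inlV_ne_inrV H K p y h
    · by_cases h2 : y = K.pairing q
      · rw [if_neg h1, if_pos h2] at h
        exact inlV_ne_inrV H K (H.pairing p) y h
      · rw [if_neg h1, if_neg h2] at h
        exact K.fixfree y (inrV_injective H K h)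
  rintro ⟨(u | u), k⟩
  · exact hl (u, k)
  · exact hr (u, k)

/-- Gluing two graphs along a pair of color-0 edges.  When `H` and `K` are
connected, the two new color-0 edges form a 2-edge-cut of the glued graph, and
conversely every connected graph with a color-0 2-edge-cut arises this way
from the two closed graphs obtained by cutting the two edges and closing each
side. -/
def glue (p : H.V) (q : K.V) : TGraph where
  B := H.B ⊕ K.B
  pairing := (glueFun_involutive H K p q).toPerm
  invol := fun v => glueFun_involutive H K p q v
  fixfree := fun v => glueFun_fixfree H K p q v

/-- Insertion of a melonic dipole (the 2-point graph obtained by cutting one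
color-0 edge of `G_2`) on the color-0 edge `{v, G.pairing v}` of `G`. -/
def insertDipole (G : TGraph) (v : G.V) : TGraph :=
  glue G G2 v ((0 : Fin 2), (0 : Fin 4))

end TGraph

open TGraph

/-- Melonic graphs (up to isomorphism): `G_2` is melonic, and inserting a
melonic dipole on any color-0 edge of a melonic graph yields a melonic
graph. -/
inductive IsMelonic : TGraph → Prop
  | base {G : TGraph} (h : IsIso G G2) : IsMelonic G
  | insert {G : TGraph} (hG : IsMelonic G) (v : G.V) {H : TGraph}
      (h : IsIso H (G.insertDipole v)) : IsMelonic H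

/-- Double tadpoles decorated with melonic 2-point functions (up to
isomorphism): these are exactly the graphs obtained from one of the double
tadpoles `G_1^{(c)}` by repeatedly inserting melonic dipoles on color-0 edges,
i.e. double tadpoles whose two color-0 edges are replaced by melonic 2-point
functions. -/
inductive IsDecoratedTadpole : TGraph → Prop
  | base {G : TGraph} (c : Fin 3) (h : IsIso G (G1 c)) : IsDecoratedTadpole G
  | insert {G : TGraph} (hG : IsDecoratedTadpole G) (v : G.V) {H : TGraph}
      (h : IsIso H (G.insertDipole v)) : IsDecoratedTadpole H

/-!
For two distinct colors, the faces of these colors are the faces of a closed surface, so that its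
Euler characteristic bounds their number; summing over the three pairs of colors gives
`2 F ≤ 3 b + 6`. If `2 F ≥ 3 b + 5`, one of these surfaces is a sphere; an orientation of it makes
the number of color-0 edges on every face of the third color even, and counting color-0 edges then
produces a face of length two. A flip of two color-0 edges either disconnects the graph, which has
then a 2-edge-cut along which the count of faces is additive, or changes the number of faces by an
amount bounded by the first estimate. The latter forces a face of length two to be part of a melonic
dipole. Removing dipoles one by one leaves a single bubble when `b` is odd.
-/

section Permutations

variable {X : Type*}

/-- A perfect matching of a set, encoded as a fixed-point-free involution. -/
structure IsPerfectMatching (σ : Perm X) : Prop where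
  apply_apply : ∀ x, σ (σ x) = x
  apply_ne : ∀ x, σ x ≠ x

/-- The `𝔽₂`-valued functions invariant under a set `S` of permutations, that is, the indicators
of the unions of orbits of the group generated by `S`. -/
def invariants (S : Set (Perm X)) : Submodule (ZMod 2) (X → ZMod 2) where
  carrier := {f | ∀ σ ∈ S, ∀ x, f (σ x) = f x}
  add_mem' hf hg σ hσ x := by simp only [Pi.add_apply, hf σ hσ x, hg σ hσ x]
  zero_mem' _ _ _ := rfl
  smul_mem' a f hf σ hσ x := by simp only [Pi.smul_apply, hf σ hσ x]

/-- The number of orbits of the group generated by a set of permutations. -/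
noncomputable def numOrbits (S : Set (Perm X)) : ℕ :=
  Nat.card (MulAction.orbitRel.Quotient (Subgroup.closure S) X)

/-- The function `s` takes different values at the two ends of each edge of each of the matchings
in `S`. -/
def Alternates (s : X → ZMod 2) (S : Set (Perm X)) : Prop :=
  ∀ σ ∈ S, ∀ x, s (σ x) = s x + 1

theorem mem_invariants_singleton {σ : Perm X} {f : X → ZMod 2} :
    f ∈ invariants {σ} ↔ ∀ x, f (σ x) = f x :=
  ⟨fun h => h σ rfl, by rintro h _ rfl; exact h⟩

theorem mem_invariants_pair {σ τ : Perm X} {f : X → ZMod 2} :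
    f ∈ invariants {σ, τ} ↔ (∀ x, f (σ x) = f x) ∧ ∀ x, f (τ x) = f x :=
  ⟨fun h => ⟨h σ (Or.inl rfl), h τ (Or.inr rfl)⟩, by rintro h _ (rfl | rfl); exacts [h.1, h.2]⟩

theorem invariants_union (S T : Set (Perm X)) :
    invariants (S ∪ T) = invariants S ⊓ invariants T := by
  ext f
  exact ⟨fun h => ⟨fun σ hσ => h σ (Or.inl hσ), fun σ hσ => h σ (Or.inr hσ)⟩,
    fun h σ hσ => hσ.elim (h.1 σ) (h.2 σ)⟩

theorem iff_of_mem_orbit_closure {S : Set (Perm X)} {P : X → Prop}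
    (hP : ∀ σ ∈ S, ∀ x, P (σ x) ↔ P x) {u v : X}
    (h : u ∈ MulAction.orbit (Subgroup.closure S) v) : P u ↔ P v := by
  obtain ⟨⟨g, hg⟩, rfl⟩ := h
  change P (g v) ↔ P v
  induction hg using Subgroup.closure_induction generalizing v with
  | mem σ hσ => exact hP σ hσ v
  | one => rfl
  | mul a b _ _ iha ihb => exact iha.trans ihb
  | inv a _ iha => simpa using (iha (v := a⁻¹ v)).symm

theorem apply_mem_orbit_closure {S : Set (Perm X)} {σ : Perm X} (hσ : σ ∈ S) (x : X) :
    σ x ∈ MulAction.orbit (Subgroup.closure S) x :=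
  ⟨⟨σ, Subgroup.subset_closure hσ⟩, rfl⟩

/-- Functions on the set of orbits are the same as invariant functions. -/
noncomputable def invariantsEquiv (S : Set (Perm X)) :
    invariants S ≃ₗ[ZMod 2]
      (MulAction.orbitRel.Quotient (Subgroup.closure S) X → ZMod 2) where
  toFun f q := Quotient.liftOn' q f.1 fun a b hab =>
    (iff_of_mem_orbit_closure (P := (f.1 · = f.1 b)) (fun σ hσ x => by rw [f.2 σ hσ x]) hab).2 rfl
  map_add' f g := funext fun q => Quotient.inductionOn' q fun _ => rfl
  map_smul' a f := funext fun q => Quotient.inductionOn' q fun _ => rfl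
  invFun f := ⟨fun x => f (Quotient.mk'' x), fun _ hσ x =>
    congrArg f (Quotient.sound' (apply_mem_orbit_closure hσ x))⟩
  left_inv _ := rfl
  right_inv f := funext fun q => Quotient.inductionOn' q fun _ => rfl

theorem mem_orbit_closure_iff {S : Set (Perm X)} {u v : X} :
    u ∈ MulAction.orbit (Subgroup.closure S) v ↔ ∀ f ∈ invariants S, f u = f v := by
  classical
  refine ⟨fun h f hf => (iff_of_mem_orbit_closure (P := (f · = f v))
    (fun σ hσ x => by rw [hf σ hσ x]) h).2 rfl, fun h => ?_⟩
  let f := (invariantsEquiv S).symm (Pi.single (Quotient.mk'' v) 1)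
  have hf : f.1 u = f.1 v := h f f.2
  have hv : f.1 v = 1 := Pi.single_eq_same (M := fun _ => ZMod 2) _ _
  by_contra hu
  have hne : (Quotient.mk'' u : MulAction.orbitRel.Quotient (Subgroup.closure S) X) ≠
      Quotient.mk'' v := fun h => hu (Quotient.exact' h)
  have hu : f.1 u = 0 := Pi.single_eq_of_ne (M := fun _ => ZMod 2) hne 1
  exact zero_ne_one (hu.symm.trans (hf.trans hv))

theorem numOrbits_eq_finrank [Finite X] (S : Set (Perm X)) :
    numOrbits S = Module.finrank (ZMod 2) (invariants S) := by
  have : Finite (MulAction.orbitRel.Quotient (Subgroup.closure S) X) := Quotient.finite _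
  have := Fintype.ofFinite (MulAction.orbitRel.Quotient (Subgroup.closure S) X)
  rw [(invariantsEquiv S).finrank_eq, Module.finrank_fintype_fun_eq_card, numOrbits,
    Nat.card_eq_fintype_card]

theorem Alternates.add_mem_invariants {S : Set (Perm X)} {s t : X → ZMod 2}
    (hs : Alternates s S) (ht : Alternates t S) : s + t ∈ invariants S := by
  intro σ hσ x
  rw [Pi.add_apply, hs σ hσ, ht σ hσ, add_add_add_comm, CharTwo.add_self_eq_zero, add_zero,
    Pi.add_apply]

theorem Alternates.add_invariant {S : Set (Perm X)} {s f : X → ZMod 2}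
    (hs : Alternates s S) (hf : f ∈ invariants S) : Alternates (s + f) S := by
  intro σ hσ x
  rw [Pi.add_apply, hs σ hσ, hf σ hσ, add_right_comm, Pi.add_apply]

theorem Alternates.union {S T : Set (Perm X)} {s : X → ZMod 2}
    (hS : Alternates s S) (hT : Alternates s T) : Alternates s (S ∪ T) :=
  fun σ hσ => hσ.elim (hS σ) (hT σ)

theorem Alternates.mono {S T : Set (Perm X)} {s : X → ZMod 2} (hT : Alternates s T)
    (h : S ⊆ T) : Alternates s S :=
  fun σ hσ => hT σ (h hσ)

theorem exists_alternates_union {S T : Set (Perm X)} {s t : X → ZMod 2}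
    (hs : Alternates s S) (ht : Alternates t T) (h : s + t ∈ invariants S ⊔ invariants T) :
    ∃ r, Alternates r (S ∪ T) := by
  obtain ⟨f, hf, g, hg, hfg⟩ := Submodule.mem_sup.1 h
  have heq : s + f = t + g := by
    refine funext fun x => CharTwo.add_eq_zero.1 ?_
    have hx : f x + g x = s x + t x := congrFun hfg x
    rw [Pi.add_apply, Pi.add_apply, add_add_add_comm, hx, CharTwo.add_self_eq_zero]
  exact ⟨s + f, (hs.add_invariant hf).union (heq ▸ ht.add_invariant hg)⟩

theorem IsPerfectMatching.apply_eq_iff {σ : Perm X} (hσ : IsPerfectMatching σ) {x y : X} :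
    σ x = y ↔ x = σ y := by
  rw [← σ.injective.eq_iff (a := σ x), hσ.apply_apply]

open Classical in
theorem IsPerfectMatching.indicator_apply {σ : Perm X} (hσ : IsPerfectMatching σ) {T : Set X}
    (hT : ∀ x ∈ T, σ x ∈ T) (x : X) :
    T.indicator (1 : X → ZMod 2) (σ x) = T.indicator 1 x :=
  if_congr ⟨fun h => hσ.apply_apply x ▸ hT _ h, hT x⟩ rfl rfl

theorem IsPerfectMatching.exists_alternates {σ : Perm X} (hσ : IsPerfectMatching σ) :
    ∃ s, Alternates s {σ} := by
  classical
  let : LinearOrder X := WellOrderingRel.isWellOrder.linearOrder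
  refine ⟨fun x => if x < σ x then 1 else 0, fun τ hτ x => ?_⟩
  obtain rfl : τ = σ := hτ
  rcases (hσ.apply_ne x).lt_or_gt with h | h
  · simp only [hσ.apply_apply, h, h.not_gt, if_true, if_false, zero_add]
  · simp only [hσ.apply_apply, h, h.not_gt, if_true, if_false, CharTwo.add_self_eq_zero]

theorem invariants_pair_sup_invariants_pair_le (α β γ : Perm X) :
    invariants {γ, α} ⊔ invariants {β, γ} ≤
      (invariants {α} ⊔ invariants {β}) ⊓ invariants {γ} := by
  rw [Set.insert_eq, Set.insert_eq, invariants_union, invariants_union]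
  exact sup_le (le_inf (inf_le_right.trans le_sup_left) inf_le_left)
    (le_inf (inf_le_left.trans le_sup_right) inf_le_right)

theorem finrank_invariants_sup_invariants_add_numOrbits [Finite X]
    (α β γ : Perm X) :
    Module.finrank (ZMod 2) ↥(invariants {γ, α} ⊔ invariants {β, γ}) + numOrbits {α, β, γ} =
      numOrbits {γ, α} + numOrbits {β, γ} := by
  have hunion : ({α, β, γ} : Set (Perm X)) = {γ, α} ∪ {β, γ} := by
    ext
    simp only [Set.mem_union, Set.mem_insert_iff, Set.mem_singleton_iff]
    tauto
  rw [hunion]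
  simp only [numOrbits_eq_finrank]
  rw [invariants_union, Submodule.finrank_sup_add_finrank_inf_eq]

section Fintype

variable [Fintype X]

theorem IsPerfectMatching.sum_eq_zero {σ : Perm X} (hσ : IsPerfectMatching σ) {f : X → ZMod 2}
    (hf : f ∈ invariants {σ}) : ∑ x, f x = 0 :=
  Finset.sum_involution (fun x _ => σ x)
    (fun x _ => by rw [mem_invariants_singleton.1 hf, CharTwo.add_self_eq_zero])
    (fun x _ _ => hσ.apply_ne x) (fun _ _ => Finset.mem_univ _) (fun x _ => hσ.apply_apply x)

theorem Alternates.sum_mul_eq {σ : Perm X} {s f : X → ZMod 2} (hs : Alternates s {σ})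
    (hf : f ∈ invariants {σ}) :
    ∑ x, f x * s x = (((Finset.univ.filter (f · = 1)).card / 2 : ℕ) : ZMod 2) := by
  have hmul : ∀ x, f x * s x = if f x = 1 ∧ s x = 1 then 1 else 0 := by
    intro x
    generalize f x = a, s x = b
    revert a b
    decide
  have hcard : (Finset.univ.filter fun x => f x = 1 ∧ s x = 1).card =
      (Finset.univ.filter fun x => f x = 1 ∧ ¬ s x = 1).card := by
    refine Finset.card_equiv σ fun x => ?_
    simp only [Finset.mem_filter_univ, mem_invariants_singleton.1 hf, hs σ rfl]
    generalize s x = b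
    revert b
    simp only [and_congr_right_iff]
    intro b _
    revert b
    decide
  have hsplit := Finset.card_filter_add_card_filter_not (s := Finset.univ.filter (f · = 1))
    (fun x => s x = 1)
  rw [Finset.filter_filter, Finset.filter_filter, ← hcard] at hsplit
  simp only [hmul, Finset.sum_boole]
  rw [← hsplit, ← two_mul, Nat.mul_div_cancel_left _ two_pos]

theorem IsPerfectMatching.dotProductEquiv_mem_dualAnnihilator_iff [DecidableEq X] {σ : Perm X}
    (hσ : IsPerfectMatching σ) {f : X → ZMod 2} :
    dotProductEquiv (ZMod 2) X f ∈ (invariants {σ}).dualAnnihilator ↔ f ∈ invariants {σ} := by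
  rw [Submodule.mem_dualAnnihilator]
  constructor
  · intro h
    refine mem_invariants_singleton.2 fun x => ?_
    have hmem : (Pi.single x 1 + Pi.single (σ x) 1 : X → ZMod 2) ∈ invariants {σ} := by
      refine mem_invariants_singleton.2 fun y => ?_
      simp only [Pi.add_apply, Pi.single_apply, hσ.apply_eq_iff, hσ.apply_apply]
      exact add_comm _ _
    have hsum : f x + f (σ x) = 0 := by simpa [dotProductEquiv] using h _ hmem
    exact (CharTwo.add_eq_zero.1 hsum).symm
  · intro hf g hg
    rw [mem_invariants_singleton] at hf hg
    exact hσ.sum_eq_zero (f := f * g)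
      (mem_invariants_singleton.2 fun x => by simp only [Pi.mul_apply, hf x, hg x])

theorem dualAnnihilator_iSup_invariants [DecidableEq X] {S : Set (Perm X)}
    (hS : ∀ σ ∈ S, IsPerfectMatching σ) :
    (⨆ σ ∈ S, invariants {σ}).dualAnnihilator =
      (invariants S).map (dotProductEquiv (ZMod 2) X).toLinearMap := by
  ext φ
  obtain ⟨f, rfl⟩ := (dotProductEquiv (ZMod 2) X).surjective φ
  rw [Submodule.mem_map_equiv, LinearEquiv.symm_apply_apply]
  simp only [Submodule.dualAnnihilator_iSup_eq, Submodule.mem_iInf]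
  exact forall₂_congr fun σ hσ =>
    (hS σ hσ).dotProductEquiv_mem_dualAnnihilator_iff.trans mem_invariants_singleton

theorem finrank_iSup_invariants_add_numOrbits {S : Set (Perm X)}
    (hS : ∀ σ ∈ S, IsPerfectMatching σ) :
    Module.finrank (ZMod 2) ↥(⨆ σ ∈ S, invariants {σ}) + numOrbits S = Fintype.card X := by
  classical
  have h := Subspace.finrank_add_finrank_dualAnnihilator_eq (⨆ σ ∈ S, invariants {σ})
  rwa [dualAnnihilator_iSup_invariants hS, LinearEquiv.finrank_map_eq, ← numOrbits_eq_finrank,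
    Module.finrank_fintype_fun_eq_card] at h

theorem mem_iSup_invariants {S : Set (Perm X)} (hS : ∀ σ ∈ S, IsPerfectMatching σ)
    {g : X → ZMod 2} (hg : ∀ f ∈ invariants S, ∑ x, f x * g x = 0) :
    g ∈ ⨆ σ ∈ S, invariants {σ} := by
  classical
  rw [← Subspace.forall_mem_dualAnnihilator_apply_eq_zero_iff, dualAnnihilator_iSup_invariants hS]
  rintro _ ⟨f, hf, rfl⟩
  exact hg f hf

theorem IsPerfectMatching.two_mul_numOrbits {σ : Perm X} (hσ : IsPerfectMatching σ) :
    2 * numOrbits {σ} = Fintype.card X := by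
  have h := finrank_iSup_invariants_add_numOrbits (S := {σ}) (by simpa using hσ)
  rw [iSup_singleton, ← numOrbits_eq_finrank] at h
  rw [two_mul, h]

end Fintype

theorem exists_alternates_pair [Finite X] {σ τ : Perm X} (hσ : IsPerfectMatching σ)
    (hτ : IsPerfectMatching τ) : ∃ s, Alternates s {σ, τ} := by
  have := Fintype.ofFinite X
  obtain ⟨s, hs⟩ := hσ.exists_alternates
  obtain ⟨t, ht⟩ := hτ.exists_alternates
  refine exists_alternates_union hs ht ?_
  have h := mem_iSup_invariants (S := {σ, τ}) (g := s + t) (by simpa using ⟨hσ, hτ⟩) ?_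
  · rwa [iSup_pair] at h
  · intro f hf
    rw [mem_invariants_pair, ← mem_invariants_singleton, ← mem_invariants_singleton] at hf
    simp only [Pi.add_apply, mul_add, Finset.sum_add_distrib]
    rw [hs.sum_mul_eq hf.1, ht.sum_mul_eq hf.2, CharTwo.add_self_eq_zero]

section ThreeMatchings

variable [Fintype X] {α β γ : Perm X} (hα : IsPerfectMatching α) (hβ : IsPerfectMatching β)
  (hγ : IsPerfectMatching γ)

include hα hβ hγ

theorem finrank_sup_inf_add_numOrbits :
    2 * (Module.finrank (ZMod 2) ↥((invariants {α} ⊔ invariants {β}) ⊓ invariants {γ}) +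
      numOrbits {α, β}) = Fintype.card X + 2 * numOrbits {α, β, γ} := by
  have hpair := finrank_iSup_invariants_add_numOrbits (S := {α, β}) (by simpa using ⟨hα, hβ⟩)
  have htriple := finrank_iSup_invariants_add_numOrbits (S := {α, β, γ})
    (by simpa using ⟨hα, hβ, hγ⟩)
  rw [iSup_insert, iSup_pair, ← sup_assoc] at htriple
  rw [iSup_pair] at hpair
  have hsup := Submodule.finrank_sup_add_finrank_inf_eq (invariants {α} ⊔ invariants {β})
    (invariants {γ})
  rw [← numOrbits_eq_finrank {γ}] at hsup
  have := hγ.two_mul_numOrbits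
  omega

/-- The three families of alternating cycles are the vertices of a triangulated closed surface
with `|X|` triangles; this is the bound of its Euler characteristic by twice its number of
components. -/
theorem two_mul_sum_numOrbits_le :
    2 * (numOrbits {α, β} + numOrbits {β, γ} + numOrbits {γ, α}) ≤
      Fintype.card X + 4 * numOrbits {α, β, γ} := by
  have hle := Submodule.finrank_mono (invariants_pair_sup_invariants_pair_le α β γ)
  have hsup := finrank_sup_inf_add_numOrbits hα hβ hγ
  have hinf := finrank_invariants_sup_invariants_add_numOrbits α β γ
  omega

/-- A surface of maximal Euler characteristic is a union of spheres, hence orientable. -/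
theorem exists_alternates_of_le_two_mul_sum_numOrbits
    (h : Fintype.card X + 4 * numOrbits {α, β, γ} ≤
      2 * (numOrbits {α, β} + numOrbits {β, γ} + numOrbits {γ, α})) :
    ∃ s, Alternates s {α, β, γ} := by
  have hsup := finrank_sup_inf_add_numOrbits hα hβ hγ
  have hinf := finrank_invariants_sup_invariants_add_numOrbits α β γ
  have heq := Submodule.eq_of_le_of_finrank_le
    (invariants_pair_sup_invariants_pair_le α β γ) (by omega)
  obtain ⟨s, hs⟩ := exists_alternates_pair hα hβ
  obtain ⟨t, ht⟩ := exists_alternates_pair hβ hγ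
  obtain ⟨u, hu⟩ := exists_alternates_pair hγ hα
  have hmem : u + t ∈ (invariants {α} ⊔ invariants {β}) ⊓ invariants {γ} := by
    refine ⟨?_, (hu.mono (by simp)).add_mem_invariants (ht.mono (by simp))⟩
    have hadd : u + t = (u + s) + (s + t) := by
      funext x
      simp only [Pi.add_apply]
      rw [add_assoc, ← add_assoc (s x), CharTwo.add_self_eq_zero, zero_add]
    rw [hadd]
    exact Submodule.add_mem_sup
      ((hu.mono (by simp)).add_mem_invariants (hs.mono (by simp)))
      ((hs.mono (by simp)).add_mem_invariants (ht.mono (by simp)))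
  rw [← heq] at hmem
  obtain ⟨r, hr⟩ := exists_alternates_union hu ht hmem
  exact ⟨r, hr.mono (by simp [Set.insert_subset_iff])⟩

end ThreeMatchings

theorem Alternates.apply_mul_pow {σ τ : Perm X} {s : X → ZMod 2} (hs : Alternates s {σ, τ})
    (n : ℕ) (x : X) : s (((σ * τ) ^ n) x) = s x := by
  induction n with
  | zero => rfl
  | succ n ih =>
    rw [pow_succ', Perm.mul_apply, Perm.mul_apply, hs σ (by simp), hs τ (by simp), ih, add_assoc,
      CharTwo.add_self_eq_zero, add_zero]

theorem Alternates.even_minimalPeriod {σ : Perm X} {s : X → ZMod 2} (hs : Alternates s {σ})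
    (x : X) : Even (Function.minimalPeriod σ x) := by
  have hiterate : ∀ n, s (σ^[n] x) = s x + n := by
    intro n
    induction n with
    | zero => rw [Function.iterate_zero, id_eq, Nat.cast_zero, add_zero]
    | succ n ih => rw [Function.iterate_succ_apply', hs σ rfl, ih, Nat.cast_succ, add_assoc]
  have h := hiterate (Function.minimalPeriod σ x)
  rwa [Function.iterate_minimalPeriod, left_eq_add, ZMod.natCast_eq_zero_iff_even] at h

/-- An alternating function separates the iterates of `σ * τ` from their images under `σ`. -/
theorem Alternates.injective_pow_mul_pow {σ τ : Perm X} {s : X → ZMod 2}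
    (hs : Alternates s {σ, τ}) {k : ℕ} {x : X} (hk : k ≤ Function.minimalPeriod (σ * τ) x) :
    Function.Injective fun p : Bool × Fin k => (σ ^ p.1.toNat * (σ * τ) ^ (p.2 : ℕ)) x := by
  have hs_pow : ∀ (b : Bool) (n : ℕ),
      s ((σ ^ b.toNat * (σ * τ) ^ n) x) = s x + if b then 1 else 0 := by
    intro b n
    cases b
    · simp only [Bool.toNat_false, pow_zero, one_mul, hs.apply_mul_pow, Bool.false_eq_true,
        if_false, add_zero]
    · simp only [Bool.toNat_true, pow_one, Perm.mul_apply, hs σ (Set.mem_insert _ _),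
        hs.apply_mul_pow, if_true]
  rintro ⟨b, m⟩ ⟨b', n⟩ (h : (σ ^ b.toNat * (σ * τ) ^ (m : ℕ)) x =
    (σ ^ b'.toNat * (σ * τ) ^ (n : ℕ)) x)
  obtain rfl : b = b' := by
    have h := congrArg s h
    rw [hs_pow, hs_pow, add_right_inj] at h
    cases b <;> cases b' <;> first | rfl | exact absurd h (by decide)
  have hmn : (m : ℕ) = n := by
    have h := (σ ^ b.toNat).injective h
    rw [← Perm.iterate_eq_pow, ← Perm.iterate_eq_pow] at h
    exact Function.iterate_injOn_Iio_minimalPeriod (m.2.trans_le hk) (n.2.trans_le hk) h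
  rw [Fin.ext hmn]

theorem two_mul_mul_numOrbits_le [Fintype X] {σ τ : Perm X} (hσ : IsPerfectMatching σ)
    (hτ : IsPerfectMatching τ) {k : ℕ} (hk : ∀ x, k ≤ Function.minimalPeriod (σ * τ) x) :
    2 * k * numOrbits {σ, τ} ≤ Fintype.card X := by
  classical
  obtain ⟨s, hs⟩ := exists_alternates_pair hσ hτ
  let Q := MulAction.orbitRel.Quotient (Subgroup.closure {σ, τ}) X
  have : Finite Q := Quotient.finite _
  have hσ_mem : σ ∈ Subgroup.closure {σ, τ} := Subgroup.subset_closure (by simp)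
  have hτ_mem : τ ∈ Subgroup.closure {σ, τ} := Subgroup.subset_closure (by simp)
  let j : Q × Bool × Fin k → X := fun p =>
    (σ ^ p.2.1.toNat * (σ * τ) ^ (p.2.2 : ℕ)) p.1.out
  have hmk : ∀ p, Quotient.mk'' (j p) = p.1 := fun p =>
    (Quotient.sound' (s₁ := MulAction.orbitRel _ X)
      ⟨⟨_, mul_mem (pow_mem hσ_mem _) (pow_mem (mul_mem hσ_mem hτ_mem) _)⟩, rfl⟩).trans
      p.1.out_eq'
  have hj : Function.Injective j := by
    rintro ⟨q, p⟩ ⟨q', p'⟩ h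
    obtain rfl : q = q' := (hmk _).symm.trans ((congrArg _ h).trans (hmk _))
    have hp : p = p' := hs.injective_pow_mul_pow (hk _) h
    rw [hp]
  have h := Nat.card_le_card_of_injective j hj
  rw [Nat.card_prod, Nat.card_prod, Nat.card_fin, Nat.card_eq_fintype_card (α := Bool),
    Fintype.card_bool, Nat.card_eq_fintype_card (α := X)] at h
  rwa [mul_comm]

theorem even_card_of_apply_mem {σ : Perm X} (hσ : IsPerfectMatching σ) {T : Finset X}
    (hT : ∀ x ∈ T, σ x ∈ T) : Even T.card := by
  rw [← ZMod.natCast_eq_zero_iff_even, Finset.cast_card]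
  exact Finset.sum_involution (fun x _ => σ x) (fun _ _ => CharTwo.add_self_eq_zero 1)
    (fun x _ _ => hσ.apply_ne x) hT (fun x _ => hσ.apply_apply x)

/-- Parity: a finite set cannot be matched by `σ` and be matched by `τ` except at one point. -/
theorem apply_mem_of_forall_ne [Finite X] {σ τ : Perm X} (hσ : IsPerfectMatching σ)
    (hτ : IsPerfectMatching τ) {T : Set X} {x : X} (hσT : ∀ v ∈ T, σ v ∈ T)
    (hτT : ∀ v ∈ T, v ≠ x → τ v ∈ T) (hx : x ∈ T) : τ x ∈ T := by
  classical
  by_contra hτx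
  have := Fintype.ofFinite X
  have heven : Even T.toFinset.card :=
    even_card_of_apply_mem hσ fun v hv => by simpa using hσT v (by simpa using hv)
  have heven' : Even (T.toFinset.erase x).card := by
    refine even_card_of_apply_mem hτ fun v hv => ?_
    rw [Finset.mem_erase, Set.mem_toFinset] at hv ⊢
    refine ⟨fun hvx => hτx ?_, hτT v hv.2 hv.1⟩
    rw [← hvx, hτ.apply_apply]
    exact hv.2
  rw [Finset.card_erase_of_mem (by simpa using hx)] at heven'
  have : 0 < T.toFinset.card := Finset.card_pos.2 ⟨x, by simpa using hx⟩
  rw [Nat.even_sub this] at heven'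
  exact absurd (heven'.1 heven) (by decide)

end Permutations

namespace TGraph

variable {G : TGraph}

section Basic

variable (G)

theorem isPerfectMatching_pairing : IsPerfectMatching G.pairing :=
  ⟨G.invol, G.fixfree⟩

theorem isPerfectMatching_colPerm (c : Fin 3) : IsPerfectMatching (G.colPerm c) where
  apply_apply v := Prod.ext rfl ((by decide : ∀ c k, bubblePerm c (bubblePerm c k) = k) c v.2)
  apply_ne v h := (by decide : ∀ c k, bubblePerm c k ≠ k) c v.2 (congrArg Prod.snd h)

theorem pairing_eq_iff {x y : G.V} : G.pairing x = y ↔ x = G.pairing y :=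
  G.isPerfectMatching_pairing.apply_eq_iff

theorem colPerm_colPerm (c : Fin 3) (v : G.V) : G.colPerm c (G.colPerm c v) = v :=
  (G.isPerfectMatching_colPerm c).apply_apply v

theorem colPerm_ne (c : Fin 3) (v : G.V) : G.colPerm c v ≠ v :=
  (G.isPerfectMatching_colPerm c).apply_ne v

theorem colPerm_colPerm_of_ne {c d e : Fin 3} (hcd : c ≠ d) (hce : c ≠ e) (hde : d ≠ e)
    (v : G.V) : G.colPerm c (G.colPerm d v) = G.colPerm e v :=
  Prod.ext rfl ((by decide : ∀ c d e : Fin 3, c ≠ d → c ≠ e → d ≠ e →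
    ∀ k, bubblePerm c (bubblePerm d k) = bubblePerm e k) c d e hcd hce hde v.2)

theorem eq_or_exists_eq_colPerm {v w : G.V} (h : w.1 = v.1) :
    w = v ∨ ∃ c, w = G.colPerm c v :=
  ((by decide : ∀ k l : Fin 4, l = k ∨ ∃ c, l = bubblePerm c k) v.2 w.2).imp
    (Prod.ext h) (Exists.imp fun _ => Prod.ext h)

theorem card_V : Fintype.card G.V = 4 * G.b := by
  rw [Fintype.card_prod, Fintype.card_fin, mul_comm, b]

theorem numFaces_eq_numOrbits (c : Fin 3) :
    G.numFaces c = numOrbits {G.pairing, G.colPerm c} := rfl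

theorem numFaces_eq_finrank (c : Fin 3) :
    G.numFaces c = Module.finrank (ZMod 2) (invariants {G.pairing, G.colPerm c}) :=
  numOrbits_eq_finrank _

theorem sameFace_iff {c : Fin 3} {u v : G.V} :
    G.sameFace c u v ↔ ∀ f ∈ invariants {G.pairing, G.colPerm c}, f u = f v :=
  mem_orbit_closure_iff

theorem F_eq : G.F = G.numFaces 0 + G.numFaces 1 + G.numFaces 2 :=
  Fin.sum_univ_three _

theorem F_eq_of_ne {c d e : Fin 3} (hcd : c ≠ d) (hce : c ≠ e) (hde : d ≠ e) :
    G.F = G.numFaces c + G.numFaces d + G.numFaces e := by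
  have huniv : (Finset.univ : Finset (Fin 3)) = {c, d, e} := by
    revert c d e
    decide
  rw [F, huniv, Finset.sum_insert (by simp [hcd, hce]), Finset.sum_pair hde, add_assoc]

end Basic

section Connectedness

/-- A set of bubbles which no color-0 edge leaves. -/
def BubbleClosed (G : TGraph) (S : Set G.B) : Prop :=
  ∀ v : G.V, v.1 ∈ S → (G.pairing v).1 ∈ S

theorem BubbleClosed.pairing_mem_iff {S : Set G.B} (hS : G.BubbleClosed S) (v : G.V) :
    (G.pairing v).1 ∈ S ↔ v.1 ∈ S :=
  ⟨fun h => G.invol v ▸ hS _ h, hS v⟩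

theorem BubbleClosed.compl {S : Set G.B} (hS : G.BubbleClosed S) : G.BubbleClosed Sᶜ :=
  fun v hv h => hv ((hS.pairing_mem_iff v).1 h)

theorem Connected.iff_of_forall_iff (hG : G.Connected) {P : G.V → Prop}
    (hpairing : ∀ v, P (G.pairing v) ↔ P v) (hcol : ∀ c v, P (G.colPerm c v) ↔ P v) (u v : G.V) :
    P u ↔ P v := by
  refine iff_of_mem_orbit_closure ?_ (hG u v)
  rintro σ (rfl | ⟨c, rfl⟩)
  exacts [hpairing, hcol c]

theorem connected_iff_bubbleClosed :
    G.Connected ↔ ∀ S : Set G.B, G.BubbleClosed S → S.Nonempty → S = Set.univ := by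
  constructor
  · rintro hG S hS ⟨a, ha⟩
    refine Set.eq_univ_of_forall fun b => ?_
    exact (hG.iff_of_forall_iff (P := (·.1 ∈ S)) hS.pairing_mem_iff (fun _ _ => Iff.rfl)
      (a, 0) (b, 0)).1 ha
  · intro h u v
    refine mem_orbit_closure_iff.2 fun f hf => ?_
    have hcol : ∀ w w' : G.V, w.1 = w'.1 → f w = f w' := by
      intro w w' hw
      rcases G.eq_or_exists_eq_colPerm hw with rfl | ⟨c, rfl⟩
      exacts [rfl, hf _ (Or.inr ⟨c, rfl⟩) _]
    have hS : G.BubbleClosed {a | f (a, 0) = f v} := by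
      intro w (hw : f (w.1, 0) = f v)
      change f ((G.pairing w).1, 0) = f v
      rw [← hw, ← hcol w (w.1, 0) rfl, ← hf G.pairing (Or.inl rfl) w]
      exact hcol _ _ rfl
    have hu : f (u.1, 0) = f v := Set.eq_univ_iff_forall.1 (h _ hS ⟨v.1, hcol _ _ rfl⟩) u.1
    exact (hcol u (u.1, 0) rfl).trans hu

end Connectedness

section FaceBound

theorem b_le_numOrbits_colPerm (G : TGraph) (c d : Fin 3) :
    G.b ≤ numOrbits {G.colPerm c, G.colPerm d} := by
  let Q := MulAction.orbitRel.Quotient (Subgroup.closure {G.colPerm c, G.colPerm d}) G.V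
  have : Finite Q := Quotient.finite _
  let bubble : Q → G.B := fun q => Quotient.liftOn' q Prod.fst fun _ v h =>
    (iff_of_mem_orbit_closure (P := (·.1 = v.1)) (by rintro _ (rfl | rfl) _ <;> rfl) h).2 rfl
  have hbubble : Function.Surjective bubble := fun a => ⟨Quotient.mk'' (a, 0), rfl⟩
  rw [b, ← Nat.card_eq_fintype_card]
  exact Nat.card_le_card_of_surjective bubble hbubble

theorem numOrbits_pairing_colPerm_colPerm_le_one (hG : G.Connected) {c d : Fin 3} (hcd : c ≠ d) :
    numOrbits {G.pairing, G.colPerm c, G.colPerm d} ≤ 1 := by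
  have : Finite (MulAction.orbitRel.Quotient
    (Subgroup.closure {G.pairing, G.colPerm c, G.colPerm d}) G.V) := Quotient.finite _
  refine Finite.card_le_one_iff_subsingleton.2 ⟨fun p q => ?_⟩
  induction p using Quotient.inductionOn' with | h u => ?_
  induction q using Quotient.inductionOn' with | h v => ?_
  refine Quotient.sound' (mem_orbit_closure_iff.2 fun f hf => ?_)
  have hpairing := hf G.pairing (by simp)
  have hc := hf (G.colPerm c) (by simp)
  have hd := hf (G.colPerm d) (by simp)
  refine (hG.iff_of_forall_iff (P := (f · = f v)) (fun w => by rw [hpairing]) ?_ u v).2 rfl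
  intro e w
  by_cases hec : e = c
  · rw [hec, hc]
  by_cases hed : e = d
  · rw [hed, hd]
  rw [← G.colPerm_colPerm_of_ne hcd (Ne.symm hec) (Ne.symm hed), hc, hd]

/-- The faces of two colors are the faces of a jacket: a connected closed surface. -/
theorem numFaces_add_numFaces_le (hG : G.Connected) {c d : Fin 3} (hcd : c ≠ d) :
    G.numFaces c + G.numFaces d ≤ G.b + 2 := by
  have h := two_mul_sum_numOrbits_le G.isPerfectMatching_pairing (G.isPerfectMatching_colPerm c)
    (G.isPerfectMatching_colPerm d)
  rw [card_V, Set.pair_comm (G.colPerm d)] at h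
  have hb := G.b_le_numOrbits_colPerm c d
  have hone := numOrbits_pairing_colPerm_colPerm_le_one hG hcd
  simp only [numFaces_eq_numOrbits]
  omega

theorem exists_alternates_of_numFaces_add_numFaces (hG : G.Connected) {c d : Fin 3} (hcd : c ≠ d)
    (h : G.numFaces c + G.numFaces d = G.b + 2) :
    ∃ s, Alternates s {G.pairing, G.colPerm c, G.colPerm d} := by
  refine exists_alternates_of_le_two_mul_sum_numOrbits G.isPerfectMatching_pairing
    (G.isPerfectMatching_colPerm c) (G.isPerfectMatching_colPerm d) ?_
  rw [card_V, Set.pair_comm (G.colPerm d)]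
  have hb := G.b_le_numOrbits_colPerm c d
  have hone := numOrbits_pairing_colPerm_colPerm_le_one hG hcd
  simp only [numFaces_eq_numOrbits] at h
  omega

theorem two_mul_F_le (hG : G.Connected) : 2 * G.F ≤ 3 * G.b + 6 := by
  have h01 := numFaces_add_numFaces_le hG (c := 0) (d := 1) (by decide)
  have h02 := numFaces_add_numFaces_le hG (c := 0) (d := 2) (by decide)
  have h12 := numFaces_add_numFaces_le hG (c := 1) (d := 2) (by decide)
  rw [F_eq]
  omega

theorem exists_planar_jacket (hG : G.Connected) (hF : 3 * G.b + 5 ≤ 2 * G.F) :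
    ∃ c d e : Fin 3, c ≠ d ∧ c ≠ e ∧ d ≠ e ∧ G.numFaces d + G.numFaces e = G.b + 2 ∧
      G.b < 2 * G.numFaces c := by
  have h01 := numFaces_add_numFaces_le hG (c := 0) (d := 1) (by decide)
  have h02 := numFaces_add_numFaces_le hG (c := 0) (d := 2) (by decide)
  have h12 := numFaces_add_numFaces_le hG (c := 1) (d := 2) (by decide)
  rw [F_eq] at hF
  by_cases h0 : G.b < 2 * G.numFaces 0 ∧ G.numFaces 1 + G.numFaces 2 = G.b + 2
  · exact ⟨0, 1, 2, by decide, by decide, by decide, h0.2, h0.1⟩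
  by_cases h1 : G.b < 2 * G.numFaces 1 ∧ G.numFaces 0 + G.numFaces 2 = G.b + 2
  · exact ⟨1, 0, 2, by decide, by decide, by decide, h1.2, h1.1⟩
  exact ⟨2, 0, 1, by decide, by decide, by decide, by omega, by omega⟩

theorem FaceLen2.of_minimalPeriod_eq_two {c : Fin 3} {v : G.V}
    (hne : G.pairing v ≠ G.colPerm c v)
    (h : Function.minimalPeriod (G.pairing * G.colPerm c) (G.colPerm c v) = 2) :
    G.FaceLen2 c v := by
  refine ⟨hne, ?_⟩
  have hper := Function.iterate_minimalPeriod (f := G.pairing * G.colPerm c) (x := G.colPerm c v)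
  rw [h] at hper
  simpa only [Function.iterate_succ, Function.iterate_zero, Function.comp_apply, id_eq,
    Perm.mul_apply, colPerm_colPerm] using hper

/-- In the orientation of a planar jacket of colors `d` and `e`, the edges of color `0` reverse the
sign and those of color `c` preserve it, so that each face of color `c` has an even number of
color-0 edges; were it never two, there would be at most `b / 2` such faces. -/
theorem exists_faceLen2 (hG : G.Connected) (hF : 3 * G.b + 5 ≤ 2 * G.F) :
    ∃ c v, G.FaceLen2 c v := by
  obtain ⟨c, d, e, hcd, hce, hde, hplanar, hshort⟩ := exists_planar_jacket hG hF
  obtain ⟨s, hs⟩ := exists_alternates_of_numFaces_add_numFaces hG hde hplanar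
  have hs_pairing := hs G.pairing (by simp)
  have hs_col : ∀ v, s (G.colPerm c v) = s v := by
    intro v
    rw [← G.colPerm_colPerm_of_ne hde hcd.symm hce.symm, hs (G.colPerm d) (by simp),
      hs (G.colPerm e) (by simp), add_assoc, CharTwo.add_self_eq_zero, add_zero]
  have hs_mul : Alternates s {G.pairing * G.colPerm c} := by
    rintro _ rfl v
    rw [Perm.mul_apply, hs_pairing, hs_col]
  by_contra! hno
  have hfour : ∀ v, 4 ≤ Function.minimalPeriod (G.pairing * G.colPerm c) v := by
    intro v
    obtain ⟨m, hm⟩ := hs_mul.even_minimalPeriod v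
    have hpos : 0 < Function.minimalPeriod (G.pairing * G.colPerm c) v :=
      Function.minimalPeriod_pos_of_mem_periodicPts
        ((G.pairing * G.colPerm c).injective.mem_periodicPts v)
    have htwo : Function.minimalPeriod (G.pairing * G.colPerm c) v ≠ 2 := by
      intro h
      refine hno c (G.colPerm c v) (.of_minimalPeriod_eq_two ?_ (by rwa [colPerm_colPerm]))
      intro h
      have := hs_pairing (G.colPerm c v)
      rw [h, hs_col, left_eq_add] at this
      exact one_ne_zero this
    omega
  have h8 := two_mul_mul_numOrbits_le G.isPerfectMatching_pairing (G.isPerfectMatching_colPerm c)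
    hfour
  rw [← numFaces_eq_numOrbits, card_V] at h8
  omega

end FaceBound

end TGraph

theorem finrank_le_finrank_add_one {K V : Type*} [Field K] [AddCommGroup V] [Module K V]
    [FiniteDimensional K V] {A B : Submodule K V} (φ : V →ₗ[K] K)
    (h : A ⊓ LinearMap.ker φ ≤ B) : Module.finrank K A ≤ Module.finrank K B + 1 := by
  have hle := Submodule.finrank_mono h
  have hsup := Submodule.finrank_sup_add_finrank_inf_eq A (LinearMap.ker φ)
  have hV := Submodule.finrank_le (A ⊔ LinearMap.ker φ)
  have hker := LinearMap.finrank_range_add_finrank_ker φ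
  have hrange := Submodule.finrank_le (LinearMap.range φ)
  rw [Module.finrank_self] at hrange
  omega

namespace TGraph

variable {G : TGraph}

section Cut

/-- The color-0 edges at `x` and `y` are the only ones leaving the set `S` of bubbles, and `x` and
`y` are their ends in `S`: they form a 2-edge-cut. -/
structure IsCut (G : TGraph) (S : Set G.B) (x y : G.V) : Prop where
  ne : x ≠ y
  left_mem : x.1 ∈ S
  right_mem : y.1 ∈ S
  pairing_left_notMem : (G.pairing x).1 ∉ S
  pairing_right_notMem : (G.pairing y).1 ∉ S
  pairing_mem : ∀ v : G.V, v.1 ∈ S → v ≠ x → v ≠ y → (G.pairing v).1 ∈ S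

theorem IsCut.compl {S : Set G.B} {x y : G.V} (h : G.IsCut S x y) :
    G.IsCut Sᶜ (G.pairing x) (G.pairing y) where
  ne := G.pairing.injective.ne h.ne
  left_mem := h.pairing_left_notMem
  right_mem := h.pairing_right_notMem
  pairing_left_notMem := by rw [G.invol]; exact not_not.2 h.left_mem
  pairing_right_notMem := by rw [G.invol]; exact not_not.2 h.right_mem
  pairing_mem v hv hx hy hv' := by
    refine hv (G.invol v ▸ h.pairing_mem (G.pairing v) hv' ?_ ?_)
    · exact fun h => hx ((G.pairing_eq_iff).1 h)
    · exact fun h => hy ((G.pairing_eq_iff).1 h)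

/-- The color-0 pairing with the half-edges at `x` and `y` joined to each other. It is an
involution only away from the former partners of `x` and `y`. -/
def rejoin (G : TGraph) (x y v : G.V) : G.V :=
  if v = x then y else if v = y then x else G.pairing v

theorem rejoin_left (x y : G.V) : G.rejoin x y x = y :=
  if_pos rfl

theorem rejoin_right {x y : G.V} (h : x ≠ y) : G.rejoin x y y = x :=
  (if_neg h.symm).trans (if_pos rfl)

theorem rejoin_of_ne {x y v : G.V} (hx : v ≠ x) (hy : v ≠ y) : G.rejoin x y v = G.pairing v :=
  (if_neg hx).trans (if_neg hy)

namespace IsCut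

variable {S : Set G.B} {x y : G.V}

theorem rejoin_mem (h : G.IsCut S x y) {v : G.V} (hv : v.1 ∈ S) : (G.rejoin x y v).1 ∈ S := by
  by_cases hx : v = x
  · rw [hx, rejoin_left]
    exact h.right_mem
  by_cases hy : v = y
  · rw [hy, rejoin_right h.ne]
    exact h.left_mem
  rw [rejoin_of_ne hx hy]
  exact h.pairing_mem v hv hx hy

theorem rejoin_rejoin (h : G.IsCut S x y) {v : G.V} (hv : v.1 ∈ S) :
    G.rejoin x y (G.rejoin x y v) = v := by
  by_cases hx : v = x
  · rw [hx, rejoin_left, rejoin_right h.ne]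
  by_cases hy : v = y
  · rw [hy, rejoin_right h.ne, rejoin_left]
  rw [rejoin_of_ne hx hy, rejoin_of_ne, G.invol]
  · rintro rfl
    exact h.pairing_left_notMem (by rwa [G.invol])
  · rintro rfl
    exact h.pairing_right_notMem (by rwa [G.invol])

theorem rejoin_ne (h : G.IsCut S x y) (v : G.V) : G.rejoin x y v ≠ v := by
  by_cases hx : v = x
  · rw [hx, rejoin_left]
    exact h.ne.symm
  by_cases hy : v = y
  · rw [hy, rejoin_right h.ne]
    exact h.ne
  rw [rejoin_of_ne hx hy]
  exact G.fixfree v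

theorem apply_left_eq_apply_right (h : G.IsCut S x y) {c : Fin 3} {f : G.V → ZMod 2}
    (hf : f ∈ invariants {G.pairing, G.colPerm c}) : f x = f y := by
  obtain ⟨hpairing, hcol⟩ := mem_invariants_pair.1 hf
  by_contra hne
  let T : Set G.V := {v | v.1 ∈ S ∧ f v = f x}
  refine h.pairing_left_notMem (apply_mem_of_forall_ne (T := T) (x := x)
    (G.isPerfectMatching_colPerm c) G.isPerfectMatching_pairing ?_ ?_ ⟨h.left_mem, rfl⟩).1
  · exact fun v hv => ⟨hv.1, (hcol v).trans hv.2⟩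
  · refine fun v hv hx => ⟨h.pairing_mem v hv.1 hx ?_, (hpairing v).trans hv.2⟩
    rintro rfl
    exact hne hv.2.symm

/-- The restriction of `rejoin` to the vertices of one side of a cut. -/
def sideRejoin (h : G.IsCut S x y) (v : S × Fin 4) : S × Fin 4 :=
  (⟨(G.rejoin x y (v.1, v.2)).1, h.rejoin_mem v.1.2⟩, (G.rejoin x y (v.1, v.2)).2)

theorem sideRejoin_involutive (h : G.IsCut S x y) : Function.Involutive h.sideRejoin := fun v =>
  have hv := h.rejoin_rejoin (v := (v.1, v.2)) v.1.2
  Prod.ext (Subtype.ext (congrArg Prod.fst hv)) (congrArg (Prod.snd : G.V → Fin 4) hv)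

open Classical in
/-- One side of a 2-edge-cut, closed by joining its two half-edges. -/
noncomputable def side (h : G.IsCut S x y) : TGraph where
  B := S
  fintypeB := Fintype.ofFinite S
  pairing := h.sideRejoin_involutive.toPerm
  invol := h.sideRejoin_involutive
  fixfree v (hv : h.sideRejoin v = v) := h.rejoin_ne (v.1, v.2)
    (Prod.ext (congrArg (fun w : S × Fin 4 => w.1.1) hv) (congrArg (fun w : S × Fin 4 => w.2) hv))

variable (h : G.IsCut S x y)

/-- The inclusion of the vertices of a side. -/
def sideVal (v : h.side.V) : G.V := (Subtype.val (p := (· ∈ S)) v.1, v.2)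

/-- A vertex of the graph seen in the side containing it. -/
def sideMk (v : G.V) (hv : v.1 ∈ S) : h.side.V := ((⟨v.1, hv⟩ : S), v.2)

theorem sideVal_mem (v : h.side.V) : (h.sideVal v).1 ∈ S :=
  Subtype.property (p := (· ∈ S)) v.1

theorem sideVal_injective : Function.Injective h.sideVal := fun _ _ hvw =>
  Prod.ext (Subtype.ext (congrArg (Prod.fst : G.V → G.B) hvw))
    (congrArg (Prod.snd : G.V → Fin 4) hvw)

theorem sideVal_pairing (v : h.side.V) :
    h.sideVal (h.side.pairing v) = G.rejoin x y (h.sideVal v) := rfl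

theorem b_side_add_b_side_compl : h.side.b + h.compl.side.b = G.b := by
  simp only [b, ← Nat.card_eq_fintype_card]
  exact Set.ncard_add_ncard_compl S

theorem b_side_pos : 0 < h.side.b :=
  Fintype.card_pos_iff.2 ⟨(⟨x.1, h.left_mem⟩ : S)⟩

theorem connected_side (hG : G.Connected) : h.side.Connected := by
  rw [connected_iff_bubbleClosed] at hG ⊢
  intro T hT hne
  let R : Set G.B := {a | ∃ ha : a ∈ S, (⟨a, ha⟩ : S) ∈ T}
  have hrejoin : ∀ v : G.V, v.1 ∈ R → (G.rejoin x y v).1 ∈ R := fun v ⟨hv, hvT⟩ =>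
    ⟨h.rejoin_mem hv, hT (h.sideMk v hv) hvT⟩
  have hR : ∀ v : G.V, v.1 ∈ R → v ≠ x → v ≠ y → (G.pairing v).1 ∈ R := fun v hv hx hy =>
    rejoin_of_ne hx hy ▸ hrejoin v hv
  by_cases hx : x.1 ∈ R
  · have hclosed : G.BubbleClosed (R ∪ Sᶜ) := by
      rintro v (hv | hv)
      · by_cases hvx : v = x
        · exact Or.inr (hvx ▸ h.pairing_left_notMem)
        by_cases hvy : v = y
        · exact Or.inr (hvy ▸ h.pairing_right_notMem)
        exact Or.inl (hR v hv hvx hvy)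
      · by_cases hvx : v = G.pairing x
        · exact Or.inl (by rwa [hvx, G.invol])
        by_cases hvy : v = G.pairing y
        · exact Or.inl (by rw [hvy, G.invol, ← rejoin_left x y]; exact hrejoin x hx)
        exact Or.inr (h.compl.pairing_mem v hv hvx hvy)
    have huniv := hG _ hclosed ⟨x.1, Or.inl hx⟩
    refine Set.eq_univ_of_forall fun a => ?_
    rcases Set.eq_univ_iff_forall.1 huniv (Subtype.val (p := (· ∈ S)) a) with ha | ha
    · exact ha.2
    · exact absurd (Subtype.property (p := (· ∈ S)) a) ha
  · have hclosed : G.BubbleClosed R := by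
      refine fun v hv => hR v hv (fun hvx => hx (hvx ▸ hv)) (fun hvy => hx ?_)
      rw [← rejoin_right h.ne, ← hvy]
      exact hvy ▸ hrejoin v hv
    obtain ⟨a, ha⟩ := hne
    have huniv := hG R hclosed ⟨_, Subtype.property (p := (· ∈ S)) a, ha⟩
    exact absurd (huniv ▸ Set.mem_univ x.1) hx

/-- The restriction to one side of a cut of the indicators of faces; the cut edges belong to the
same face, so that it does not matter how they are closed. -/
noncomputable def restrictInvariants (c : Fin 3) :
    invariants {G.pairing, G.colPerm c} →ₗ[ZMod 2]
      invariants {h.side.pairing, h.side.colPerm c} where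
  toFun f := ⟨fun v => f.1 (h.sideVal v), by
    obtain ⟨hpairing, hcol⟩ := mem_invariants_pair.1 f.2
    refine mem_invariants_pair.2 ⟨fun v => ?_, fun v => hcol (h.sideVal v)⟩
    have hxy := h.apply_left_eq_apply_right f.2
    rw [sideVal_pairing]
    by_cases hx : h.sideVal v = x
    · rw [hx, rejoin_left, hxy]
    by_cases hy : h.sideVal v = y
    · rw [hy, rejoin_right h.ne, hxy]
    rw [rejoin_of_ne hx hy, hpairing]⟩
  map_add' _ _ := rfl
  map_smul' _ _ := rfl

theorem numFaces_add_one_le (c : Fin 3) :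
    G.numFaces c + 1 ≤ h.side.numFaces c + h.compl.side.numFaces c := by
  simp only [numFaces_eq_finrank]
  rw [← Module.finrank_prod]
  let r := (h.restrictInvariants c).prod (h.compl.restrictInvariants c)
  have hinj : Function.Injective r := by
    intro f g hfg
    refine Subtype.ext (funext fun v => ?_)
    by_cases hv : v.1 ∈ S
    · exact congrFun (congrArg Subtype.val (congrArg Prod.fst hfg)) (h.sideMk v hv)
    · exact congrFun (congrArg Subtype.val (congrArg Prod.snd hfg)) (h.compl.sideMk v hv)
  refine (LinearMap.finrank_le_finrank_of_injective hinj).lt_of_ne fun heq => ?_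
  obtain ⟨f, hf⟩ := (LinearMap.injective_iff_surjective_of_finrank_eq_finrank heq).1 hinj
    (⟨1, fun _ _ _ => rfl⟩, 0)
  have hx : f.1 x = 1 :=
    congrFun (congrArg Subtype.val (congrArg Prod.fst hf)) (h.sideMk x h.left_mem)
  have hx' : f.1 (G.pairing x) = 0 :=
    congrFun (congrArg Subtype.val (congrArg Prod.snd hf)) (h.compl.sideMk _ h.compl.left_mem)
  rw [(mem_invariants_pair.1 f.2).1, hx] at hx'
  exact one_ne_zero hx'

theorem F_add_three_le : G.F + 3 ≤ h.side.F + h.compl.side.F := by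
  have h0 := h.numFaces_add_one_le 0
  have h1 := h.numFaces_add_one_le 1
  have h2 := h.numFaces_add_one_le 2
  simp only [F_eq]
  omega

end IsCut

end Cut

section Flip

/-- The pairing of a flipped graph, as a permutation of the vertices of the original graph. -/
def flipPerm (G : TGraph) (x y : G.V) : Perm G.V :=
  Equiv.swap (G.pairing x) y * G.pairing * Equiv.swap (G.pairing x) y

theorem b_flip (x y : G.V) : (G.flip x y).b = G.b := rfl

theorem numFaces_flip (x y : G.V) (c : Fin 3) :
    (G.flip x y).numFaces c = Module.finrank (ZMod 2) (invariants {G.flipPerm x y, G.colPerm c}) :=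
  numFaces_eq_finrank (G.flip x y) c

theorem flipPerm_flipPerm (x y v : G.V) : G.flipPerm x y (G.flipPerm x y v) = v :=
  (G.flip x y).invol v

variable {x y : G.V}

theorem flipPerm_left (hyx : y ≠ x) : G.flipPerm x y x = y := by
  rw [flipPerm, Perm.mul_apply, Perm.mul_apply,
    Equiv.swap_apply_of_ne_of_ne (G.fixfree x).symm hyx.symm, Equiv.swap_apply_left]

theorem flipPerm_right (hyx : y ≠ x) : G.flipPerm x y y = x := by
  have h := flipPerm_flipPerm x y x
  rwa [flipPerm_left hyx] at h

theorem flipPerm_pairing_left (hyx : y ≠ x) : G.flipPerm x y (G.pairing x) = G.pairing y := by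
  rw [flipPerm, Perm.mul_apply, Perm.mul_apply, Equiv.swap_apply_left,
    Equiv.swap_apply_of_ne_of_ne (G.pairing.injective.ne hyx) (G.fixfree y)]

theorem flipPerm_pairing_right (hyx : y ≠ x) : G.flipPerm x y (G.pairing y) = G.pairing x := by
  rw [← flipPerm_pairing_left hyx, flipPerm_flipPerm]

theorem flipPerm_of_ne {v : G.V} (hx : v ≠ x) (hy : v ≠ y) (hx' : v ≠ G.pairing x)
    (hy' : v ≠ G.pairing y) : G.flipPerm x y v = G.pairing v := by
  rw [flipPerm, Perm.mul_apply, Perm.mul_apply, Equiv.swap_apply_of_ne_of_ne hx' hy,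
    Equiv.swap_apply_of_ne_of_ne (G.pairing.injective.ne hx)
      fun h => hy' (G.pairing_eq_iff.1 h)]

/-- A component of the flipped graph is separated from the rest by the two flipped edges. -/
theorem exists_isCut_of_not_connected_flip (hG : G.Connected) (hyx : y ≠ x)
    (hflip : ¬ (G.flip x y).Connected) : ∃ S, G.IsCut S x y := by
  rw [connected_iff_bubbleClosed] at hG hflip
  obtain ⟨S, hS, hx, hSne⟩ :
      ∃ S : Set G.B, (G.flip x y).BubbleClosed S ∧ x.1 ∈ S ∧ S ≠ Set.univ := by
    push Not at hflip
    obtain ⟨S, hS, hne, hSne⟩ := hflip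
    by_cases hx : x.1 ∈ S
    · exact ⟨S, hS, hx, hSne⟩
    · exact ⟨Sᶜ, hS.compl, hx, Set.compl_ne_univ.2 hne⟩
  have hflip_mem : ∀ v : G.V, (G.flipPerm x y v).1 ∈ S ↔ v.1 ∈ S := hS.pairing_mem_iff
  have hy : y.1 ∈ S := by
    have h := (hflip_mem x).2 hx
    rwa [flipPerm_left hyx] at h
  have hpairing_iff : (G.pairing y).1 ∈ S ↔ (G.pairing x).1 ∈ S := by
    rw [← flipPerm_pairing_left hyx, hflip_mem]
  have hpairing_mem : ∀ v : G.V, v.1 ∈ S → v ≠ x → v ≠ y → v ≠ G.pairing x → v ≠ G.pairing y →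
      (G.pairing v).1 ∈ S := by
    intro v hv h1 h2 h3 h4
    rwa [← flipPerm_of_ne h1 h2 h3 h4, hflip_mem]
  have hx' : (G.pairing x).1 ∉ S := by
    refine fun hx' => hSne (hG S (fun v hv => ?_) ⟨_, hx⟩)
    by_cases h1 : v = x
    · rwa [h1]
    by_cases h2 : v = y
    · rwa [h2, hpairing_iff]
    by_cases h3 : v = G.pairing x
    · rwa [h3, G.invol]
    by_cases h4 : v = G.pairing y
    · rwa [h4, G.invol]
    exact hpairing_mem v hv h1 h2 h3 h4
  have hy' : (G.pairing y).1 ∉ S := fun h => hx' (hpairing_iff.1 h)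
  exact ⟨S, hyx.symm, hx, hy, hx', hy', fun v hv h1 h2 =>
    hpairing_mem v hv h1 h2 (fun h => hx' (h ▸ hv)) (fun h => hy' (h ▸ hv))⟩

theorem mem_invariants_flipPerm_pair (hyx : y ≠ x) {c : Fin 3} {f : G.V → ZMod 2}
    (hf : f ∈ invariants {G.pairing, G.colPerm c}) (hxy : f x = f y) :
    f ∈ invariants {G.flipPerm x y, G.colPerm c} := by
  obtain ⟨hpairing, hcol⟩ := mem_invariants_pair.1 hf
  refine mem_invariants_pair.2 ⟨fun v => ?_, hcol⟩
  by_cases h1 : v = x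
  · rw [h1, flipPerm_left hyx, hxy]
  by_cases h2 : v = y
  · rw [h2, flipPerm_right hyx, hxy]
  by_cases h3 : v = G.pairing x
  · rw [h3, flipPerm_pairing_left hyx, hpairing, hpairing, hxy]
  by_cases h4 : v = G.pairing y
  · rw [h4, flipPerm_pairing_right hyx, hpairing, hpairing, hxy]
  rw [flipPerm_of_ne h1 h2 h3 h4, hpairing]

theorem numFaces_le_numFaces_flip_add_one (hyx : y ≠ x) (c : Fin 3) :
    G.numFaces c ≤ (G.flip x y).numFaces c + 1 := by
  rw [numFaces_flip, numFaces_eq_finrank]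
  refine finrank_le_finrank_add_one (V := G.V → ZMod 2) (.proj x - .proj y) ?_
  rintro f ⟨hf, hxy⟩
  exact mem_invariants_flipPerm_pair hyx hf (sub_eq_zero.1 hxy)

theorem numFaces_lt_numFaces_flip (hyx : y ≠ x) {c : Fin 3} (hxy : G.sameFace c x y)
    {T : Set G.V} (hflip : ∀ v ∈ T, G.flipPerm x y v ∈ T) (hcol : ∀ v ∈ T, G.colPerm c v ∈ T)
    (hx : x ∈ T) (hx' : G.pairing x ∉ T) : G.numFaces c < (G.flip x y).numFaces c := by
  rw [numFaces_flip, numFaces_eq_finrank]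
  rw [sameFace_iff] at hxy
  refine Submodule.finrank_lt_finrank_of_lt (lt_of_le_of_ne ?_ fun heq => ?_)
  · exact fun f hf => mem_invariants_flipPerm_pair hyx hf (hxy f hf)
  have hT : T.indicator 1 ∈ invariants {G.flipPerm x y, G.colPerm c} := mem_invariants_pair.2
    ⟨(G.flip x y).isPerfectMatching_pairing.indicator_apply hflip,
      (G.isPerfectMatching_colPerm c).indicator_apply hcol⟩
  have := (mem_invariants_pair.1 (heq.ge hT)).1 x
  rw [Set.indicator_of_notMem hx', Set.indicator_of_mem hx] at this
  exact zero_ne_one this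

end Flip

end TGraph

namespace TGraph

variable {G : TGraph}

section Dipole

/-- A melonic dipole: the bubbles of `v` and `w` are distinct, and each color-`c` neighbour of `v`
is joined to that of `w` by a color-0 edge; `v` and `w` are the external vertices. -/
def IsDipole (G : TGraph) (v w : G.V) : Prop :=
  v.1 ≠ w.1 ∧ ∀ c, G.pairing (G.colPerm c v) = G.colPerm c w

/-- The vertex `p` is not an end of one of the color-0 edges inside the dipole with external
vertices `v` and `w`. -/
def AvoidsInternal (G : TGraph) (p v w : G.V) : Prop :=
  ∀ c, p ≠ G.colPerm c v ∧ p ≠ G.colPerm c w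

theorem numFaces_lt_numFaces_flip_of_edge (m : G.V) (d : Fin 3)
    (h : G.pairing (G.colPerm d m) ≠ G.colPerm d (G.pairing m)) :
    G.numFaces d < (G.flip (G.colPerm d m) (G.colPerm d (G.pairing m))).numFaces d := by
  set x := G.colPerm d m with hx
  set y := G.colPerm d (G.pairing m) with hy
  have hxm : G.colPerm d x = m := G.colPerm_colPerm d m
  have hym : G.colPerm d y = G.pairing m := G.colPerm_colPerm d _
  have hmx : m ≠ x := (G.colPerm_ne d m).symm
  have hmy : G.pairing m ≠ y := (G.colPerm_ne d _).symm
  have hyx : y ≠ x := (G.colPerm d).injective.ne (G.fixfree m)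
  have hx' : x ≠ G.pairing m := fun e => h (by rw [e, G.invol, hy, ← e, hxm])
  have hy' : y ≠ m := fun e => hx' (by rw [← hym, e])
  have hflip_m : G.flipPerm x y m = G.pairing m :=
    flipPerm_of_ne hmx hy'.symm (fun e => hx' (G.pairing_eq_iff.1 e.symm))
      (fun e => hmy (G.pairing_eq_iff.1 e.symm).symm)
  have hsame : G.sameFace d x y := by
    refine G.sameFace_iff.2 fun f hf => ?_
    obtain ⟨hpairing, hcol⟩ := mem_invariants_pair.1 hf
    rw [hx, hy, hcol, hcol, hpairing]
  refine numFaces_lt_numFaces_flip hyx hsame (T := {x, m, G.pairing m, y}) ?_ ?_ ?_ ?_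
  · rintro v (rfl | rfl | rfl | rfl)
    · simp [flipPerm_left hyx]
    · simp [hflip_m]
    · simp [← hflip_m, flipPerm_flipPerm]
    · simp [flipPerm_right hyx]
  · rintro v (rfl | rfl | rfl | rfl)
    · simp [hxm]
    · simp [hx]
    · simp [hy]
    · simp [hym]
  · exact Or.inl rfl
  · rintro (e | e | e | e)
    · exact G.fixfree x e
    · exact hx' (G.pairing_eq_iff.1 e)
    · exact hmx (G.pairing.injective e).symm
    · exact h e

theorem Connected.b_eq_one (hG : G.Connected) (v : G.V)
    (h : ∀ w : G.V, w.1 = v.1 → (G.pairing w).1 = v.1) : G.b = 1 := by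
  have huniv := connected_iff_bubbleClosed.1 hG {v.1} h (Set.singleton_nonempty _)
  exact Fintype.card_eq_one_iff.2 ⟨v.1, Set.eq_univ_iff_forall.1 huniv⟩

theorem FaceLen2.pairing_colPerm {c : Fin 3} {v : G.V} (h : G.FaceLen2 c v) :
    G.pairing (G.colPerm c v) = G.colPerm c (G.pairing v) := by
  rw [← h.2, G.invol]

/-- A single bubble containing a face of length two has no edges leaving it. -/
theorem FaceLen2.properFace2 (hG : G.Connected) (hb : G.b ≠ 1) {c : Fin 3} {v : G.V}
    (h : G.FaceLen2 c v) : G.ProperFace2 c v := by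
  refine ⟨h, fun hv => hb (hG.b_eq_one v fun w hw => ?_)⟩
  obtain hv | ⟨d, hd⟩ := G.eq_or_exists_eq_colPerm hv
  · exact absurd hv (G.fixfree v)
  have hcd : c ≠ d := by
    rintro rfl
    exact h.1 hd
  obtain rfl | ⟨e, rfl⟩ := G.eq_or_exists_eq_colPerm hw
  · exact hv
  by_cases hec : e = c
  · rw [hec, h.pairing_colPerm]
    exact hv
  by_cases hed : e = d
  · rw [hed, ← hd, G.invol]
  · rw [← G.colPerm_colPerm_of_ne hcd (Ne.symm hec) (Ne.symm hed), ← hd, h.2]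
    rfl

/-- Otherwise a flip of the edges at the color-`d` neighbours of `v` and its partner splits two
faces and merges at most one, and the flipped graph has too many faces. -/
theorem ProperFace2.isDipole (hF : 3 * G.b + 5 ≤ 2 * G.F)
    (hflip : ∀ x y, y ≠ x → y ≠ G.pairing x → (G.flip x y).Connected) {c : Fin 3} {v : G.V}
    (h : G.ProperFace2 c v) : G.IsDipole v (G.pairing v) := by
  refine ⟨h.2.symm, fun d => ?_⟩
  have hc := h.1.pairing_colPerm
  by_cases hdc : d = c
  · rw [hdc, hc]
  by_contra hd
  obtain ⟨e, hce, hde⟩ : ∃ e, c ≠ e ∧ d ≠ e :=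
    (by decide : ∀ c d : Fin 3, ∃ e, c ≠ e ∧ d ≠ e) c d
  have hec : ∀ u, G.colPerm e (G.colPerm c u) = G.colPerm d u :=
    G.colPerm_colPerm_of_ne hce.symm hde.symm (Ne.symm hdc)
  have hyx : G.colPerm d (G.pairing v) ≠ G.colPerm d v := (G.colPerm d).injective.ne (G.fixfree v)
  have hFd := numFaces_lt_numFaces_flip_of_edge v d hd
  have hFe := numFaces_lt_numFaces_flip_of_edge (G.colPerm c v) e (by rwa [hc, hec, hec])
  rw [hc, hec, hec] at hFe
  have hFc := numFaces_le_numFaces_flip_add_one hyx c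
  have hle := two_mul_F_le (hflip _ _ hyx (Ne.symm hd))
  rw [F_eq_of_ne _ (Ne.symm hdc) hce hde, b_flip] at hle
  rw [F_eq_of_ne _ (Ne.symm hdc) hce hde] at hF
  omega

theorem IsDipole.colPerm {v : G.V} (h : G.IsDipole v (G.pairing v)) (d : Fin 3) :
    G.IsDipole (G.colPerm d v) (G.colPerm d (G.pairing v)) := by
  refine ⟨h.1, fun e => ?_⟩
  by_cases hed : e = d
  · rw [hed, colPerm_colPerm, colPerm_colPerm]
  obtain ⟨f, hef, hdf⟩ : ∃ f, e ≠ f ∧ d ≠ f :=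
    (by decide : ∀ e d : Fin 3, ∃ f, e ≠ f ∧ d ≠ f) e d
  rw [G.colPerm_colPerm_of_ne hed hef hdf, G.colPerm_colPerm_of_ne hed hef hdf, h.2]

theorem IsDipole.exists_avoidsInternal {v : G.V} (h : G.IsDipole v (G.pairing v)) (p : G.V) :
    ∃ v w, G.IsDipole v w ∧ G.AvoidsInternal p v w := by
  by_cases hp : G.AvoidsInternal p v (G.pairing v)
  · exact ⟨v, _, h, hp⟩
  obtain ⟨d, hd⟩ := not_forall.1 hp
  refine ⟨_, _, h.colPerm d, fun e => ?_⟩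
  rw [not_and_or, not_not, not_not] at hd
  rcases hd with rfl | rfl
  · exact ⟨(G.colPerm_ne e _).symm, ne_of_apply_ne (Prod.fst : G.V → G.B) h.1⟩
  · exact ⟨ne_of_apply_ne (Prod.fst : G.V → G.B) h.1.symm, (G.colPerm_ne e _).symm⟩

theorem exists_isDipole_of_forall_flip_connected (hG : G.Connected)
    (hF : 3 * G.b + 5 ≤ 2 * G.F) (hb : G.b ≠ 1)
    (hflip : ∀ x y, y ≠ x → y ≠ G.pairing x → (G.flip x y).Connected) (p : G.V) :
    ∃ v w, G.IsDipole v w ∧ G.AvoidsInternal p v w := by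
  obtain ⟨c, v, hv⟩ := exists_faceLen2 hG hF
  exact ((hv.properFace2 hG hb).isDipole hF hflip).exists_avoidsInternal p

theorem IsDipole.of_side {S : Set G.B} {x y : G.V} (h : G.IsCut S x y) {v w : h.side.V}
    (hvw : h.side.IsDipole v w) (hx : h.side.AvoidsInternal (h.sideMk x h.left_mem) v w) :
    G.IsDipole (h.sideVal v) (h.sideVal w) := by
  refine ⟨fun hfst => hvw.1 (Subtype.ext hfst), fun c => ?_⟩
  have hrejoin : G.rejoin x y (G.colPerm c (h.sideVal v)) = G.colPerm c (h.sideVal w) :=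
    congrArg h.sideVal (hvw.2 c)
  rw [← hrejoin, rejoin_of_ne]
  · exact fun hv => (hx c).1 (h.sideVal_injective hv.symm)
  · intro hv
    rw [hv, rejoin_right h.ne] at hrejoin
    exact (hx c).2 (h.sideVal_injective hrejoin)

theorem exists_isDipole_avoidsInternal (hG : G.Connected) (hF : 3 * G.b + 6 ≤ 2 * G.F)
    (p : G.V) : ∃ v w, G.IsDipole v w ∧ G.AvoidsInternal p v w := by
  induction hn : G.b using Nat.strong_induction_on generalizing G with
  | _ n ih =>
  subst hn
  have hFG := two_mul_F_le hG
  by_cases hflip : ∀ x y, y ≠ x → y ≠ G.pairing x → (G.flip x y).Connected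
  · exact exists_isDipole_of_forall_flip_connected hG (by omega) (by omega) hflip p
  push Not at hflip
  obtain ⟨x, y, hyx, -, hxy⟩ := hflip
  obtain ⟨S, hS⟩ := exists_isCut_of_not_connected_flip hG hyx hxy
  have hb := hS.b_side_add_b_side_compl
  have hbS := hS.b_side_pos
  have hbS' := hS.compl.b_side_pos
  have hside := hS.connected_side hG
  have hside' := hS.compl.connected_side hG
  have hFS := two_mul_F_le hside
  have hFS' := two_mul_F_le hside'
  have hFSS' := hS.F_add_three_le
  by_cases hp : p.1 ∈ S
  · obtain ⟨v, w, hvw, hx⟩ :=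
      ih _ (by omega) hside' (by omega) (hS.compl.sideMk _ hS.compl.left_mem) rfl
    refine ⟨_, _, hvw.of_side hS.compl hx, fun c => ⟨?_, ?_⟩⟩
    · rintro rfl; exact hS.compl.sideVal_mem v hp
    · rintro rfl; exact hS.compl.sideVal_mem w hp
  · obtain ⟨v, w, hvw, hx⟩ := ih _ (by omega) hside (by omega) (hS.sideMk _ hS.left_mem) rfl
    refine ⟨_, _, hvw.of_side hS hx, fun c => ⟨?_, ?_⟩⟩
    · rintro rfl; exact hp (hS.sideVal_mem v)
    · rintro rfl; exact hp (hS.sideVal_mem w)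

theorem exists_isDipole (hG : G.Connected) (hF : 3 * G.b + 5 ≤ 2 * G.F) (hb : G.b ≠ 1) :
    ∃ v w, G.IsDipole v w := by
  by_cases hflip : ∀ x y, y ≠ x → y ≠ G.pairing x → (G.flip x y).Connected
  · obtain ⟨_, p, -⟩ := exists_faceLen2 hG hF
    obtain ⟨v, w, h, -⟩ := exists_isDipole_of_forall_flip_connected hG hF hb hflip p
    exact ⟨v, w, h⟩
  push Not at hflip
  obtain ⟨x, y, hyx, -, hxy⟩ := hflip
  obtain ⟨S, hS⟩ := exists_isCut_of_not_connected_flip hG hyx hxy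
  have hbS := hS.b_side_add_b_side_compl
  have hside := hS.connected_side hG
  have hside' := hS.compl.connected_side hG
  have hFSS' := hS.F_add_three_le
  by_cases hFS : 3 * hS.side.b + 6 ≤ 2 * hS.side.F
  · obtain ⟨v, w, hvw, hx⟩ := exists_isDipole_avoidsInternal hside hFS (hS.sideMk _ hS.left_mem)
    exact ⟨_, _, hvw.of_side hS hx⟩
  · obtain ⟨v, w, hvw, hx⟩ := exists_isDipole_avoidsInternal hside' (by omega)
      (hS.compl.sideMk _ hS.compl.left_mem)
    exact ⟨_, _, hvw.of_side hS.compl hx⟩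

end Dipole

end TGraph

namespace TGraph

variable {G H : TGraph}

section Iso

theorem IsIso.symm (h : IsIso G H) : IsIso H G := by
  obtain ⟨e, hpairing, hcol⟩ := h
  refine ⟨⟨e.symm, fun v => ?_, fun c v => ?_⟩⟩
  · rw [Equiv.symm_apply_eq, hpairing, Equiv.apply_symm_apply]
  · rw [Equiv.symm_apply_eq, hcol, Equiv.apply_symm_apply]

theorem IsIso.b_eq (h : IsIso G H) : G.b = H.b := by
  obtain ⟨e, -, -⟩ := h
  have hcard := Fintype.card_congr e
  rw [card_V, card_V] at hcard
  exact Nat.eq_of_mul_eq_mul_left four_pos hcard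

theorem IsIso.connected (h : IsIso G H) (hH : H.Connected) : G.Connected := by
  obtain ⟨e, hpairing, hcol⟩ := h
  intro u v
  refine mem_orbit_closure_iff.2 fun f hf => ?_
  have hconst := hH.iff_of_forall_iff (P := fun x => f (e.symm x) = f v) ?_ ?_ (e u) (e v)
  · rwa [Equiv.symm_apply_apply, Equiv.symm_apply_apply, eq_self, iff_true] at hconst
  · intro x
    obtain ⟨x, rfl⟩ := e.surjective x
    rw [← hpairing, Equiv.symm_apply_apply, Equiv.symm_apply_apply, hf _ (Or.inl rfl)]
  · intro c x
    obtain ⟨x, rfl⟩ := e.surjective x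
    rw [← hcol, Equiv.symm_apply_apply, Equiv.symm_apply_apply, hf _ (Or.inr ⟨c, rfl⟩)]

theorem IsIso.numFaces_le (h : IsIso G H) (c : Fin 3) : H.numFaces c ≤ G.numFaces c := by
  obtain ⟨e, hpairing, hcol⟩ := h
  rw [numFaces_eq_finrank, numFaces_eq_finrank,
    ← LinearEquiv.finrank_map_eq (LinearEquiv.funCongrLeft (ZMod 2) (ZMod 2) e)]
  refine Submodule.finrank_mono ?_
  rintro _ ⟨f, hf, rfl⟩
  obtain ⟨hf_pairing, hf_col⟩ := mem_invariants_pair.1 hf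
  exact mem_invariants_pair.2
    ⟨fun v => (congrArg f (hpairing v)).trans (hf_pairing _),
      fun v => (congrArg f (hcol c v)).trans (hf_col _)⟩

theorem IsIso.F_eq (h : IsIso G H) : G.F = H.F :=
  Finset.sum_congr rfl fun c _ => (h.symm.numFaces_le c).antisymm (h.numFaces_le c)

/-- A map of graphs is onto a connected graph, hence an isomorphism if there are as many
bubbles. -/
theorem isIso_of_map (hH : H.Connected) (hb : G.b = H.b) (v : G.V) (f : G.V → H.V)
    (hpairing : ∀ u, f (G.pairing u) = H.pairing (f u))
    (hcol : ∀ c u, f (G.colPerm c u) = H.colPerm c (f u)) : IsIso G H := by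
  have hsurj : Function.Surjective f := by
    intro x
    refine (hH.iff_of_forall_iff (P := (· ∈ Set.range f)) (fun y => ⟨?_, ?_⟩)
      (fun c y => ⟨?_, ?_⟩) x (f v)).2 ⟨v, rfl⟩
    · rintro ⟨u, hu⟩
      exact ⟨G.pairing u, by rw [hpairing, hu, H.invol]⟩
    · rintro ⟨u, rfl⟩
      exact ⟨G.pairing u, hpairing u⟩
    · rintro ⟨u, hu⟩
      exact ⟨G.colPerm c u, by rw [hcol, hu, colPerm_colPerm]⟩
    · rintro ⟨u, rfl⟩
      exact ⟨G.colPerm c u, hcol c u⟩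
  have hbij := (Fintype.bijective_iff_surjective_and_card f).2
    ⟨hsurj, by rw [card_V, card_V, hb]⟩
  exact ⟨⟨Equiv.ofBijective f hbij, hpairing, hcol⟩⟩

end Iso

section OneBubble

theorem connected_of_b_eq_one (hb : G.b = 1) : G.Connected := by
  have := (Fintype.card_le_one_iff_subsingleton (α := G.B)).1 hb.le
  exact connected_iff_bubbleClosed.2 fun S _ hS => Subsingleton.eq_univ_of_nonempty hS

theorem exists_isIso_G1 (hb : G.b = 1) : ∃ c, IsIso G (G1 c) := by
  obtain ⟨a, ha⟩ := Fintype.card_eq_one_iff.1 hb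
  have hV : ∀ v : G.V, (a, v.2) = v := fun v => Prod.ext (ha v.1).symm rfl
  let σ : Perm (Fin 4) := Function.Involutive.toPerm (fun k => (G.pairing (a, k)).2)
    fun k => congrArg (Prod.snd : G.V → Fin 4) ((congrArg G.pairing (hV _)).trans (G.invol _))
  obtain ⟨c, hc⟩ : ∃ c, σ = bubblePerm c :=
    (by decide : ∀ σ : Perm (Fin 4), (∀ k, σ (σ k) = k) → (∀ k, σ k ≠ k) →
      ∃ c, σ = bubblePerm c) σ (Function.Involutive.toPerm_involutive _)
      fun k hk => G.fixfree (a, k) (Prod.ext ((ha _).trans (ha _).symm) hk)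
  refine ⟨c, isIso_of_map (connected_of_b_eq_one rfl) hb (a, 0) (fun v => ((0 : Fin 1), v.2))
    (fun v => Prod.ext rfl ?_) fun _ _ => rfl⟩
  change (G.pairing v).2 = bubblePerm c v.2
  rw [← hc, ← hV v]
  rfl

end OneBubble

section FaceCounts

theorem numFaces_pos (v : G.V) (c : Fin 3) : 0 < G.numFaces c := by
  have : Finite (MulAction.orbitRel.Quotient (G.faceGroup c) G.V) := Quotient.finite _
  have : Nonempty (MulAction.orbitRel.Quotient (G.faceGroup c) G.V) := ⟨Quotient.mk'' v⟩
  exact Nat.card_pos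

/-- No face of color `c` meets both edges of color `c` of a bubble. -/
theorem two_le_numFaces (a : G.B) {c : Fin 3}
    (h : ∀ v, (G.pairing v).2 = v.2 ∨ (G.pairing v).2 = bubblePerm c v.2) :
    2 ≤ G.numFaces c := by
  have : Finite (MulAction.orbitRel.Quotient (G.faceGroup c) G.V) := Quotient.finite _
  have hlabel : ∀ k, bubblePerm c k = 0 ∨ bubblePerm c k = c.succ ↔ k = 0 ∨ k = c.succ :=
    (by decide : ∀ c k, bubblePerm c k = 0 ∨ bubblePerm c k = c.succ ↔ k = 0 ∨ k = c.succ) c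
  have hinv : ∀ σ ∈ ({G.pairing, G.colPerm c} : Set (Perm G.V)), ∀ v,
      ((σ v).2 = 0 ∨ (σ v).2 = c.succ ↔ v.2 = 0 ∨ v.2 = c.succ) := by
    rintro σ (rfl | rfl) v
    · rcases h v with hv | hv
      · rw [hv]
      · rw [hv, hlabel]
    · exact hlabel v.2
  obtain ⟨k, hk⟩ : ∃ k : Fin 4, ¬ (k = 0 ∨ k = c.succ) :=
    (by decide : ∀ c : Fin 3, ∃ k : Fin 4, ¬ (k = 0 ∨ k = c.succ)) c
  refine Finite.one_lt_card_iff_nontrivial.2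
    ⟨Quotient.mk'' (a, k), Quotient.mk'' (a, 0), fun heq => hk ?_⟩
  exact (iff_of_mem_orbit_closure (P := fun v : G.V => v.2 = 0 ∨ v.2 = c.succ) hinv
    (Quotient.exact' heq)).2 (Or.inl rfl)

theorem four_le_F_G1 (c : Fin 3) : 4 ≤ (G1 c).F := by
  obtain ⟨d, e, hcd, hce, hde⟩ : ∃ d e, c ≠ d ∧ c ≠ e ∧ d ≠ e :=
    (by decide : ∀ c : Fin 3, ∃ d e, c ≠ d ∧ c ≠ e ∧ d ≠ e) c
  have hc : 2 ≤ (G1 c).numFaces c := two_le_numFaces (0 : Fin 1) fun _ => Or.inr rfl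
  have hd := numFaces_pos (G := G1 c) ((0 : Fin 1), 0) d
  have he := numFaces_pos (G := G1 c) ((0 : Fin 1), 0) e
  rw [F_eq_of_ne _ hcd hce hde]
  omega

theorem two_le_numFaces_G2 (c : Fin 3) : 2 ≤ G2.numFaces c :=
  two_le_numFaces (0 : Fin 2) fun _ => Or.inl rfl

theorem connected_G2 : G2.Connected := by
  refine connected_iff_bubbleClosed.2 fun S hS hne => ?_
  have hswap : ∀ i : Fin 2, i ∈ S → Equiv.swap 0 1 i ∈ S := fun i hi => hS (i, 0) hi
  obtain ⟨i, hi⟩ := hne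
  refine Set.eq_univ_of_forall fun j => ?_
  obtain rfl | rfl := (by decide : ∀ i j : Fin 2, j = i ∨ j = Equiv.swap 0 1 i) i j
  exacts [hi, hswap i hi]

end FaceCounts

section Glue

variable {Y : Type*} {K : TGraph} {p : H.V} {q : K.V}

/-- The function on the vertices of a glued graph given by functions on the two pieces. -/
def glueElim (f : H.V → Y) (g : K.V → Y) (z : (H.B ⊕ K.B) × Fin 4) : Y :=
  Sum.elim (fun a => f (a, z.2)) (fun a => g (a, z.2)) z.1

theorem glueElim_inlV (f : H.V → Y) (g : K.V → Y) (u : H.V) : glueElim f g (inlV H K u) = f u :=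
  rfl

theorem glueElim_inrV (f : H.V → Y) (g : K.V → Y) (u : K.V) : glueElim f g (inrV H K u) = g u :=
  rfl

theorem glueElim_glue_pairing {σ : Y → Y} (hσ : Function.Involutive σ) {f : H.V → Y} {g : K.V → Y}
    (hf : ∀ u, u ≠ p → u ≠ H.pairing p → f (H.pairing u) = σ (f u))
    (hg : ∀ u, u ≠ q → u ≠ K.pairing q → g (K.pairing u) = σ (g u))
    (hpq : g q = σ (f p)) (hpq' : g (K.pairing q) = σ (f (H.pairing p)))
    (z : (glue H K p q).V) : glueElim f g ((glue H K p q).pairing z) = σ (glueElim f g z) := by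
  change glueElim f g (glueFun H K p q z) = σ (glueElim f g z)
  have hl : ∀ u, glueElim f g (glueFun H K p q (inlV H K u)) = σ (f u) := by
    intro u
    rw [glueFun_inlV]
    split_ifs with hp hp'
    · rw [glueElim_inrV, hpq, hp]
    · rw [glueElim_inrV, hpq', hp']
    · exact hf u hp hp'
  have hr : ∀ u, glueElim f g (glueFun H K p q (inrV H K u)) = σ (g u) := by
    intro u
    rw [glueFun_inrV]
    split_ifs with hq hq'
    · rw [glueElim_inlV, hq, hpq, hσ]
    · rw [glueElim_inlV, hq', hpq', hσ]
    · exact hg u hq hq'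
  obtain ⟨a | a, k⟩ := z
  exacts [hl (a, k), hr (a, k)]

/-- A single color-0 edge never disconnects a graph, by parity. -/
theorem bubbleClosed_of_forall_ne {S : Set G.B} (v : G.V)
    (h : ∀ u : G.V, u.1 ∈ S → u ≠ v → u ≠ G.pairing v → (G.pairing u).1 ∈ S) :
    G.BubbleClosed S := by
  have hbridge : ∀ w : G.V, (∀ u : G.V, u.1 ∈ S → u ≠ w → u ≠ G.pairing w → (G.pairing u).1 ∈ S) →
      w.1 ∈ S → (G.pairing w).1 ∈ S := by
    intro w hw hwS
    refine apply_mem_of_forall_ne (T := {u : G.V | u.1 ∈ S}) (G.isPerfectMatching_colPerm 0)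
      G.isPerfectMatching_pairing (fun u hu => hu) (fun u hu huw => ?_) hwS
    by_cases hu' : u = G.pairing w
    · rwa [hu', G.invol]
    · exact hw u hu huw hu'
  intro u hu
  by_cases huv : u = v
  · exact hbridge u (huv ▸ h) hu
  by_cases huv' : u = G.pairing v
  · refine hbridge u (fun t ht htu htu' => h t ht ?_ (huv' ▸ htu)) hu
    rwa [huv', G.invol] at htu'
  exact h u hu huv huv'

theorem b_glue : (glue H K p q).b = H.b + K.b :=
  Fintype.card_sum

theorem connected_glue (hH : H.Connected) (hK : K.Connected) : (glue H K p q).Connected := by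
  rw [connected_iff_bubbleClosed] at hH hK ⊢
  intro S hS hne
  have hl : ∀ u : H.V, Sum.inl u.1 ∈ S → (glueFun H K p q (inlV H K u)).1 ∈ S :=
    fun u => hS (inlV H K u)
  have hr : ∀ u : K.V, Sum.inr u.1 ∈ S → (glueFun H K p q (inrV H K u)).1 ∈ S :=
    fun u => hS (inrV H K u)
  have hclosedH : H.BubbleClosed (Sum.inl ⁻¹' S) :=
    bubbleClosed_of_forall_ne p fun u hu hp hp' => by
      have h := hl u hu
      rwa [glueFun_inlV, if_neg hp, if_neg hp'] at h
  have hclosedK : K.BubbleClosed (Sum.inr ⁻¹' S) :=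
    bubbleClosed_of_forall_ne q fun u hu hq hq' => by
      have h := hr u hu
      rwa [glueFun_inrV, if_neg hq, if_neg hq'] at h
  have hpq : Sum.inl p.1 ∈ S → Sum.inr q.1 ∈ S := fun h => by
    have h := hl p h
    rwa [glueFun_inlV, if_pos rfl] at h
  have hqp : Sum.inr q.1 ∈ S → Sum.inl p.1 ∈ S := fun h => by
    have h := hr q h
    rwa [glueFun_inrV, if_pos rfl] at h
  have hH := fun a (ha : Sum.inl a ∈ S) => Set.eq_univ_iff_forall.1 (hH _ hclosedH ⟨a, ha⟩)
  have hK := fun a (ha : Sum.inr a ∈ S) => Set.eq_univ_iff_forall.1 (hK _ hclosedK ⟨a, ha⟩)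
  have hp : Sum.inl p.1 ∈ S := by
    obtain ⟨a | a, ha⟩ := hne
    exacts [hH a ha p.1, hqp (hK a ha q.1)]
  refine Set.eq_univ_of_forall ?_
  rintro (a | a)
  exacts [hH p.1 hp a, hK q.1 (hpq hp) a]

theorem numFaces_add_numFaces_le_glue (c : Fin 3) :
    H.numFaces c + K.numFaces c ≤ (glue H K p q).numFaces c + 1 := by
  simp only [numFaces_eq_finrank]
  let I := invariants {(glue H K p q).pairing, (glue H K p q).colPerm c}
  let IH := invariants {H.pairing, H.colPerm c}
  let IK := invariants {K.pairing, K.colPerm c}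
  let elim : IH × IK →ₗ[ZMod 2] (glue H K p q).V → ZMod 2 :=
    { toFun := fun fg => glueElim fg.1.1 fg.2.1
      map_add' := fun _ _ => by ext ⟨_ | _, _⟩ <;> rfl
      map_smul' := fun _ _ => by ext ⟨_ | _, _⟩ <;> rfl }
  have helim : Function.Injective elim := fun fg fg' h =>
    Prod.ext (Subtype.ext (funext fun u => congrFun h (inlV H K u)))
      (Subtype.ext (funext fun u => congrFun h (inrV H K u)))
  let φ : IH × IK →ₗ[ZMod 2] ZMod 2 :=
    (LinearMap.proj p ∘ₗ IH.subtype).coprod (-(LinearMap.proj q ∘ₗ IK.subtype))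
  have hle : ⊤ ⊓ LinearMap.ker φ ≤ I.comap elim := by
    rintro ⟨⟨f, hf⟩, ⟨g, hg⟩⟩ ⟨-, hφ⟩
    have hpq : g q = f p := (add_neg_eq_zero.1 hφ).symm
    rw [mem_invariants_pair] at hf hg
    refine mem_invariants_pair.2 ⟨glueElim_glue_pairing (σ := id) (fun _ => rfl)
      (fun u _ _ => hf.1 u) (fun u _ _ => hg.1 u) hpq
      ((hg.1 q).trans (hpq.trans (hf.1 p).symm)), ?_⟩
    rintro ⟨a | a, k⟩
    exacts [hf.2 (a, k), hg.2 (a, k)]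
  have hfinrank := finrank_le_finrank_add_one φ hle
  rw [finrank_top, Module.finrank_prod] at hfinrank
  refine hfinrank.trans (Nat.add_le_add_right ?_ 1)
  exact LinearMap.finrank_le_finrank_of_injective (f := elim.restrict fun _ hfg => hfg)
    fun _ _ h => Subtype.ext (helim (congrArg Subtype.val h))

end Glue

section InsertDipole

theorem b_insertDipole (v : G.V) : (G.insertDipole v).b = G.b + 2 :=
  b_glue

theorem Connected.insertDipole (hG : G.Connected) (v : G.V) : (G.insertDipole v).Connected :=
  connected_glue hG connected_G2

theorem F_add_three_le_F_insertDipole (v : G.V) : G.F + 3 ≤ (G.insertDipole v).F := by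
  have hc : ∀ c, G.numFaces c + 1 ≤ (G.insertDipole v).numFaces c := fun c => by
    have h := numFaces_add_numFaces_le_glue (K := G2) (p := v) (q := ((0 : Fin 2), (0 : Fin 4))) c
    have h2 := two_le_numFaces_G2 c
    rw [TGraph.insertDipole]
    omega
  have h0 := hc 0
  have h1 := hc 1
  have h2 := hc 2
  simp only [F_eq]
  omega

/-- The vertices of the bubble of `v`, renumbered so that `v` becomes the vertex `0`. -/
def bubbleVertex (G : TGraph) (v : G.V) (k : Fin 4) : G.V :=
  (v.1, Fin.cons (α := fun _ => Fin 4) v.2 (fun c => bubblePerm c v.2) k)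

theorem bubbleVertex_bubblePerm (v : G.V) (c : Fin 3) (k : Fin 4) :
    G.bubbleVertex v (bubblePerm c k) = G.colPerm c (G.bubbleVertex v k) :=
  Prod.ext rfl ((by decide : ∀ (c : Fin 3) (a k : Fin 4),
    Fin.cons (α := fun _ => Fin 4) a (fun c => bubblePerm c a) (bubblePerm c k) =
      bubblePerm c (Fin.cons (α := fun _ => Fin 4) a (fun c => bubblePerm c a) k)) c v.2 k)

/-- The map to `G` from the vertices of `G2` which sends the two vertices `0` to `v` and `w`. -/
def dipoleVertex (G : TGraph) (v w : G.V) (z : G2.V) : G.V :=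
  G.bubbleVertex (![v, w] z.1) z.2

namespace IsDipole

variable {v w : G.V} (h : G.IsDipole v w)

include h

theorem symm : G.IsDipole w v :=
  ⟨h.1.symm, fun c => G.pairing_eq_iff.2 (h.2 c).symm⟩

theorem pairing_mem {u : G.V} (hu : u.1 ∈ ({v.1, w.1} : Set G.B)) (hv : u ≠ v) (hw : u ≠ w) :
    (G.pairing u).1 ∈ ({v.1, w.1} : Set G.B) := by
  rcases hu with hu | hu
  · obtain ⟨c, rfl⟩ := (G.eq_or_exists_eq_colPerm hu).resolve_left hv
    rw [h.2]
    exact Or.inr rfl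
  · obtain ⟨c, rfl⟩ := (G.eq_or_exists_eq_colPerm (v := w) hu).resolve_left hw
    rw [h.symm.2]
    exact Or.inl rfl

theorem pairing_notMem (hw : w ≠ G.pairing v) : (G.pairing v).1 ∉ ({v.1, w.1} : Set G.B) := by
  intro hmem
  by_cases hv : G.pairing v = v
  · exact G.fixfree v hv
  rcases hmem with hmem | hmem
  · obtain ⟨c, hc⟩ := (G.eq_or_exists_eq_colPerm hmem).resolve_left hv
    have hvw : v = G.colPerm c w := by rw [← h.2, ← hc, G.invol]
    exact absurd (congrArg (Prod.fst : G.V → G.B) hvw) h.1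
  · obtain ⟨c, hc⟩ := (G.eq_or_exists_eq_colPerm (v := w) hmem).resolve_left hw.symm
    rw [← h.2] at hc
    exact G.colPerm_ne c v (G.pairing.injective hc).symm

theorem isCut (hw : w ≠ G.pairing v) : G.IsCut {v.1, w.1} v w where
  ne := ne_of_apply_ne (Prod.fst : G.V → G.B) h.1
  left_mem := Or.inl rfl
  right_mem := Or.inr rfl
  pairing_left_notMem := h.pairing_notMem hw
  pairing_right_notMem := Set.pair_comm w.1 v.1 ▸
    h.symm.pairing_notMem fun hv => hw (G.pairing_eq_iff.1 hv.symm)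
  pairing_mem _ := h.pairing_mem

theorem b_eq_two (hG : G.Connected) (hw : w = G.pairing v) : G.b = 2 := by
  have hclosed : G.BubbleClosed {v.1, w.1} :=
    bubbleClosed_of_forall_ne v fun u hu hv hw' => h.pairing_mem hu hv (hw ▸ hw')
  have huniv := connected_iff_bubbleClosed.1 hG _ hclosed ⟨v.1, Or.inl rfl⟩
  rw [b, ← Nat.card_eq_fintype_card, ← Set.ncard_univ, ← huniv, Set.ncard_pair h.1]

theorem b_side (hw : w ≠ G.pairing v) : (h.isCut hw).side.b = 2 := by
  rw [b, ← Nat.card_eq_fintype_card]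
  exact Set.ncard_pair h.1

theorem dipoleVertex_pairing {z : G2.V} (hz : z.2 ≠ 0) :
    G.dipoleVertex v w (G2.pairing z) = G.pairing (G.dipoleVertex v w z) := by
  obtain ⟨i, k⟩ := z
  obtain ⟨c, rfl⟩ := Fin.exists_succ_eq.2 hz
  fin_cases i
  exacts [(h.2 c).symm, (h.symm.2 c).symm]

theorem isIso_insertDipole (hG : G.Connected) (hw : w ≠ G.pairing v) :
    IsIso G ((h.isCut hw).compl.side.insertDipole
      ((h.isCut hw).compl.sideMk (G.pairing v) (h.isCut hw).compl.left_mem)) := by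
  set hS := (h.isCut hw).compl
  set p := hS.sideMk (G.pairing v) hS.left_mem
  have hp : hS.sideVal (hS.side.pairing p) = G.pairing w := G.rejoin_left _ _
  have hside : ∀ u, u ≠ p → u ≠ hS.side.pairing p →
      hS.sideVal (hS.side.pairing u) = G.pairing (hS.sideVal u) := fun u hu hu' =>
    rejoin_of_ne (hS.sideVal_injective.ne hu) (hp ▸ hS.sideVal_injective.ne hu')
  have hdipole : ∀ z : G2.V, z ≠ ((0 : Fin 2), (0 : Fin 4)) →
      z ≠ G2.pairing ((0 : Fin 2), (0 : Fin 4)) →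
      G.dipoleVertex v w (G2.pairing z) = G.pairing (G.dipoleVertex v w z) := by
    rintro ⟨i, k⟩ hz hz'
    refine h.dipoleVertex_pairing ?_
    rintro rfl
    fin_cases i
    exacts [hz rfl, hz' rfl]
  refine (isIso_of_map hG ?_ (Sum.inr (0 : Fin 2), (0 : Fin 4))
    (glueElim hS.sideVal (G.dipoleVertex v w))
    (glueElim_glue_pairing G.invol hside hdipole (G.invol v).symm ?_) ?_).symm
  · rw [b_insertDipole, ← (h.isCut hw).b_side_add_b_side_compl, h.b_side hw, add_comm]
  · rw [hp, G.invol]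
    rfl
  · rintro c ⟨a | i, k⟩
    exacts [rfl, bubbleVertex_bubblePerm _ c k]

end IsDipole

end InsertDipole

end TGraph

section DecoratedTadpole

namespace IsDecoratedTadpole

variable {G : TGraph}

theorem connected (h : IsDecoratedTadpole G) : G.Connected := by
  induction h with
  | base c h => exact h.connected (connected_of_b_eq_one rfl)
  | insert _ v h ih => exact h.connected (ih.insertDipole v)

theorem le_two_mul_F (h : IsDecoratedTadpole G) : 3 * G.b + 5 ≤ 2 * G.F := by
  induction h with
  | base c h =>
    have hb : (G1 c).b = 1 := rfl
    have hF := four_le_F_G1 c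
    rw [h.b_eq, h.F_eq]
    omega
  | @insert G _ v H h ih =>
    have hF := F_add_three_le_F_insertDipole v
    rw [h.b_eq, h.F_eq, b_insertDipole]
    omega

end IsDecoratedTadpole

theorem exists_isDecoratedTadpole (n : ℕ) : ∃ G, IsDecoratedTadpole G ∧ G.b = 2 * n + 1 := by
  induction n with
  | zero => exact ⟨G1 0, .base 0 ⟨⟨Equiv.refl _, fun _ => rfl, fun _ _ => rfl⟩⟩, rfl⟩
  | succ n ih =>
    obtain ⟨G, hG, hb⟩ := ih
    obtain ⟨a⟩ : Nonempty G.B := Fintype.card_pos_iff.1 (hb ▸ Nat.succ_pos _ : 0 < G.b)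
    refine ⟨G.insertDipole (a, 0), .insert hG (a, 0)
      ⟨⟨Equiv.refl _, fun _ => rfl, fun _ _ => rfl⟩⟩, ?_⟩
    rw [b_insertDipole, hb]
    ring

theorem isDecoratedTadpole_of_le {G : TGraph} (hG : G.Connected) (hodd : Odd G.b)
    (hF : 3 * G.b + 5 ≤ 2 * G.F) : IsDecoratedTadpole G := by
  induction hn : G.b using Nat.strong_induction_on generalizing G with
  | _ n ih =>
  subst hn
  by_cases hb : G.b = 1
  · obtain ⟨c, hc⟩ := exists_isIso_G1 hb
    exact .base c hc
  obtain ⟨v, w, h⟩ := exists_isDipole hG hF hb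
  obtain ⟨k, hk⟩ := hodd
  have hw : w ≠ G.pairing v := fun hw => by
    have hb2 := h.b_eq_two hG hw
    omega
  have hcut := h.isCut hw
  have hdipole : hcut.side.b = 2 := h.b_side hw
  have hFdipole := two_mul_F_le (hcut.connected_side hG)
  have hbsum := hcut.b_side_add_b_side_compl
  have hFsum := hcut.F_add_three_le
  have hrest : IsDecoratedTadpole hcut.compl.side :=
    ih _ (by omega) (hcut.compl.connected_side hG) ⟨k - 1, by omega⟩ (by omega) rfl
  exact .insert hrest _ (h.isIso_insertDipole hG hw)

variable {G : TGraph} (hG : G.Connected) (hodd : Odd G.b)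

include hG hodd

theorem two_mul_F_le_of_odd : 2 * G.F ≤ 3 * G.b + 5 := by
  obtain ⟨k, hk⟩ := hodd
  have hF := two_mul_F_le hG
  omega

theorem isDecoratedTadpole_iff : IsDecoratedTadpole G ↔ 2 * G.F = 3 * G.b + 5 :=
  ⟨fun h => (two_mul_F_le_of_odd hG hodd).antisymm h.le_two_mul_F,
    fun h => isDecoratedTadpole_of_le hG hodd h.ge⟩

theorem maximizesFaces_iff : G.MaximizesFaces ↔ 2 * G.F = 3 * G.b + 5 := by
  have hle := two_mul_F_le_of_odd hG hodd
  constructor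
  · intro h
    obtain ⟨n, hn⟩ := hodd
    obtain ⟨T, hT, hb⟩ := exists_isDecoratedTadpole n
    have hFT := hT.le_two_mul_F
    have hTG := h.2 T hT.connected (hb.trans hn.symm)
    omega
  · refine fun h => ⟨hG, fun H hH hb => ?_⟩
    have hFH := two_mul_F_le_of_odd hH (hb ▸ hodd)
    omega

end DecoratedTadpole

/-- Among connected graphs of the tetrahedral model with an odd
number `b` of bubbles, the graphs maximizing the number of faces are exactly
the double tadpoles decorated with melonic 2-point functions, and they
satisfy `F(G) = (3/2)(b - 1) + 4 = (3/2) b + 5/2`. -/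
theorem odd_maximizers_tadpole (G : TGraph) (hG : G.Connected)
    (hodd : Odd G.b) :
    (G.MaximizesFaces ↔ IsDecoratedTadpole G) ∧
      (G.MaximizesFaces →
        (G.F : ℚ) = 3 / 2 * ((G.b : ℚ) - 1) + 4 ∧
          (G.F : ℚ) = 3 / 2 * G.b + 5 / 2) := by
  have hmax := maximizesFaces_iff hG hodd
  refine ⟨hmax.trans (isDecoratedTadpole_iff hG hodd).symm, fun h => ?_⟩
  have hF : (2 : ℚ) * G.F = 3 * G.b + 5 := mod_cast hmax.1 h
  constructor <;> linarith
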